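/- arXiv:1703.00252 — 5 statements merged into one kernel-verified Lean document; each statement's English description precedes it below -/
import Mathlib

section
/- Let Ω ⊂ ℝ^N be a bounded open set, Ω_J = Ω + supp J, assume J satisfies hypothesis (J) and G satisfies hypothesis (G), and let λ ≠ 0 be a real number. Then the unique regular solution u of the homogeneous Dirichlet problem ∂u/∂t(x,t) = ∫_{Ω_J} J(x−y)(u(y,t)−u(x,t)) G(x, u(y,t)−u(x,t)) dy for x ∈ Ω̄, t > 0, with u(x,t) = 0 for x ∈ Ω_J \ Ω̄, t > 0, and constant initial datum u(x,0) = λ for x ∈ Ω, satisfies lim_{t→∞} u(·,t) = 0 uniformly on Ω̄. -/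
open MeasureTheory Set Filter Topology Pointwise

noncomputable section

/-- Hypothesis (J): nonnegative, radially symmetric, continuous, compactly supported,
integral one, finite second moments. -/
def HypJ (N : ℕ) (J : (Fin N → ℝ) → ℝ) : Prop :=
  (∀ z, 0 ≤ J z) ∧
  (∀ z w : Fin N → ℝ, (∑ i, z i ^ 2) = (∑ i, w i ^ 2) → J z = J w) ∧
  Continuous J ∧ HasCompactSupport J ∧
  (∫ z, J z) = 1 ∧
  ∀ i : Fin N, Integrable fun z : Fin N → ℝ => J z * z i ^ 2

/-- Hypothesis (G): Carathéodory function with the strong monotonicity condition. -/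
def HypG (N : ℕ) (G : (Fin N → ℝ) → ℝ → ℝ) : Prop :=
  (∀ s : ℝ, Measurable fun x : Fin N → ℝ => G x s) ∧
  (∀ᵐ x : Fin N → ℝ, Continuous fun s : ℝ => G x s) ∧
  ∃ α₁ α₂ : ℝ, 0 < α₁ ∧ α₁ ≤ α₂ ∧
    ∀ᵐ x : Fin N → ℝ, ∀ s σ : ℝ, σ < s →
      α₁ * (s - σ) ≤ G x s * s - G x σ * σ ∧ G x s * s - G x σ * σ ≤ α₂ * (s - σ)

/-- A regular solution, on the whole time half-line, of the homogeneous nonlocal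
Dirichlet problem with initial datum `u₀`: a continuous curve in `C(Ω̄)` satisfying the
integral equation for every `x ∈ Ω̄` and `t > 0`, vanishing on `Ω_J \ Ω̄`, and attaining
the initial datum uniformly on `Ω̄`. -/
def RegularSolutionHom (N : ℕ) (J : (Fin N → ℝ) → ℝ) (G : (Fin N → ℝ) → ℝ → ℝ)
    (Ω : Set (Fin N → ℝ)) (u₀ : (Fin N → ℝ) → ℝ) (u : (Fin N → ℝ) → ℝ → ℝ) : Prop :=
  ContinuousOn (fun p : (Fin N → ℝ) × ℝ => u p.1 p.2) (closure Ω ×ˢ Ici (0 : ℝ)) ∧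
  (∀ x ∈ closure Ω, ∀ t ∈ Ioi (0 : ℝ),
    u x t = (∫ τ in Ioc (0 : ℝ) t, ∫ y in Ω + tsupport J,
      J (x - y) * (u y τ - u x τ) * G x (u y τ - u x τ)) + u₀ x) ∧
  (∀ y ∈ (Ω + tsupport J) \ closure Ω, ∀ t ∈ Ioi (0 : ℝ), u y t = 0) ∧
  TendstoUniformlyOn (fun t x => u x t) u₀ (𝓝[Ioi (0 : ℝ)] 0) (closure Ω)

lemma aux_bound {N : ℕ} {K : Set (Fin N → ℝ)} (hK : IsCompact K)
    {J : (Fin N → ℝ) → ℝ} (hJc : Continuous J) (hJs : HasCompactSupport J)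
    {v : (Fin N → ℝ) → ℝ → ℝ}
    (hv : ContinuousOn (fun p : (Fin N → ℝ) × ℝ => v p.1 p.2) (K ×ˢ univ))
    (hv0 : ∀ y, y ∉ K → ∀ τ, v y τ = 0) (P : ℝ → ℝ) (hP : Continuous P) (a b : ℝ) :
    ∃ C, ∀ x ∈ K, ∀ τ ∈ Icc a b, ∀ y, ‖J (x - y) * P (v y τ - v x τ)‖ ≤ C := by
  obtain ⟨CJ, hCJ⟩ := hJc.bounded_above_of_compact_support hJs
  have hc : IsCompact (K ×ˢ Icc a b) := hK.prod isCompact_Icc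
  obtain ⟨M, hM⟩ := hc.exists_bound_of_continuousOn
    (hv.mono (prod_mono_right (subset_univ _)))
  obtain ⟨CP, hCP⟩ := (isCompact_Icc (a := -(2 * |M|)) (b := 2 * |M|)).exists_bound_of_continuousOn
    hP.continuousOn
  refine ⟨CJ * CP, fun x hx τ hτ y => ?_⟩
  have hb : ∀ z, |v z τ| ≤ |M| := by
    intro z
    by_cases hz : z ∈ K
    · exact (hM (z, τ) ⟨hz, hτ⟩).trans (le_abs_self M)
    · rw [hv0 z hz]; simp
  have h1 := abs_le.1 (hb x)
  have h2 := abs_le.1 (hb y)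
  have h3 : ‖P (v y τ - v x τ)‖ ≤ CP := hCP _ ⟨by linarith, by linarith⟩
  rw [norm_mul]
  exact mul_le_mul (hCJ _) h3 (norm_nonneg _) ((norm_nonneg _).trans (hCJ (x - y)))

lemma aux_meas {N : ℕ} {K : Set (Fin N → ℝ)} (hK : IsCompact K) (A : Set (Fin N → ℝ))
    {J : (Fin N → ℝ) → ℝ} (hJc : Continuous J)
    {v : (Fin N → ℝ) → ℝ → ℝ}
    (hv : ContinuousOn (fun p : (Fin N → ℝ) × ℝ => v p.1 p.2) (K ×ˢ univ))
    (hv0 : ∀ y, y ∉ K → ∀ τ, v y τ = 0) (P : ℝ → ℝ) (hP : Continuous P) (x : Fin N → ℝ) (τ : ℝ) :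
    AEStronglyMeasurable (fun y => J (x - y) * P (v y τ - v x τ)) (volume.restrict A) := by
  have h1 : ContinuousOn (fun y => v y τ) K :=
    hv.comp (f := fun y => (y, τ)) (by fun_prop) (fun y hy => ⟨hy, mem_univ _⟩)
  have h2 : AEStronglyMeasurable (fun y => v y τ) volume := by
    have h3 : (fun y => v y τ) = K.indicator (fun y => v y τ) := by
      ext y
      by_cases hy : y ∈ K
      · simp [hy]
      · simp [hy, hv0 y hy]
    rw [h3, aestronglyMeasurable_indicator_iff hK.measurableSet]
    exact h1.aestronglyMeasurable hK.measurableSet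
  have h4 : AEStronglyMeasurable (fun y => P (v y τ - v x τ)) volume :=
    hP.comp_aestronglyMeasurable (h2.sub aestronglyMeasurable_const)
  have h5 : AEStronglyMeasurable (fun y => J (x - y)) (volume : Measure (Fin N → ℝ)) :=
    (hJc.comp (by fun_prop : Continuous fun y => x - y)).aestronglyMeasurable
  exact (h5.mul h4).restrict

lemma aux_int {N : ℕ} {K : Set (Fin N → ℝ)} (hK : IsCompact K) {A : Set (Fin N → ℝ)}
    (hAf : volume A < ⊤)
    {J : (Fin N → ℝ) → ℝ} (hJc : Continuous J) (hJs : HasCompactSupport J)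
    {v : (Fin N → ℝ) → ℝ → ℝ}
    (hv : ContinuousOn (fun p : (Fin N → ℝ) × ℝ => v p.1 p.2) (K ×ˢ univ))
    (hv0 : ∀ y, y ∉ K → ∀ τ, v y τ = 0) (P : ℝ → ℝ) (hP : Continuous P) (x : Fin N → ℝ)
    (hx : x ∈ K) (τ : ℝ) :
    IntegrableOn (fun y => J (x - y) * P (v y τ - v x τ)) A := by
  obtain ⟨C, hC⟩ := aux_bound hK hJc hJs hv hv0 P hP τ τ
  have : IsFiniteMeasure (volume.restrict A) := ⟨by simpa using hAf⟩
  exact Integrable.of_bound (aux_meas hK A hJc hv hv0 P hP x τ) C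
    (Eventually.of_forall fun y => hC x hx τ ⟨le_rfl, le_rfl⟩ y)

lemma aux_cont {N : ℕ} {K : Set (Fin N → ℝ)} (hK : IsCompact K) {A : Set (Fin N → ℝ)}
    (hAf : volume A < ⊤)
    {J : (Fin N → ℝ) → ℝ} (hJc : Continuous J) (hJs : HasCompactSupport J)
    {v : (Fin N → ℝ) → ℝ → ℝ}
    (hv : ContinuousOn (fun p : (Fin N → ℝ) × ℝ => v p.1 p.2) (K ×ˢ univ))
    (hv0 : ∀ y, y ∉ K → ∀ τ, v y τ = 0) (P : ℝ → ℝ) (hP : Continuous P) :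
    ContinuousOn (fun p : (Fin N → ℝ) × ℝ => ∫ y in A, J (p.1 - y) * P (v y p.2 - v p.1 p.2))
      (K ×ˢ univ) := by
  rintro ⟨x₀, t₀⟩ hp
  obtain ⟨C, hC⟩ := aux_bound hK hJc hJs hv hv0 P hP (t₀ - 1) (t₀ + 1)
  have : IsFiniteMeasure (volume.restrict A) := ⟨by simpa using hAf⟩
  apply continuousWithinAt_of_dominated (bound := fun _ => C)
  · exact Eventually.of_forall fun p => aux_meas hK A hJc hv hv0 P hP p.1 p.2
  · have h1 : ∀ᶠ p : (Fin N → ℝ) × ℝ in 𝓝[K ×ˢ univ] (x₀, t₀), p.2 ∈ Icc (t₀ - 1) (t₀ + 1) := by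
      apply mem_nhdsWithin_of_mem_nhds
      exact continuous_snd.continuousAt.preimage_mem_nhds
        (Icc_mem_nhds (by simp) (by simp))
    filter_upwards [h1, self_mem_nhdsWithin] with p h2 h3
    exact Eventually.of_forall fun y => hC p.1 h3.1 p.2 h2 y
  · exact integrable_const C
  · refine Eventually.of_forall fun y => ?_
    have h1 : ContinuousOn (fun p : (Fin N → ℝ) × ℝ => v y p.2) (K ×ˢ univ) := by
      by_cases hy : y ∈ K
      · exact hv.comp (f := fun p : (Fin N → ℝ) × ℝ => (y, p.2)) (by fun_prop)
          (fun p hp => ⟨hy, mem_univ _⟩)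
      · simp only [hv0 y hy]; exact continuousOn_const
    have h2 : ContinuousOn (fun p : (Fin N → ℝ) × ℝ => J (p.1 - y)) (K ×ˢ univ) :=
      (hJc.comp (by fun_prop : Continuous fun p : (Fin N → ℝ) × ℝ => p.1 - y)).continuousOn
    exact (h2.mul (hP.comp_continuousOn (h1.sub hv))) _ hp

lemma aux_compare {N : ℕ} {K : Set (Fin N → ℝ)} (hK : IsCompact K) {A : Set (Fin N → ℝ)}
    (hA : MeasurableSet A) (hAf : volume A < ⊤)
    {J : (Fin N → ℝ) → ℝ} (hJc : Continuous J) (hJs : HasCompactSupport J) (hJ0 : ∀ z, 0 ≤ J z)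
    {v : (Fin N → ℝ) → ℝ → ℝ}
    (hv : ContinuousOn (fun p : (Fin N → ℝ) × ℝ => v p.1 p.2) (K ×ˢ univ))
    (hv0 : ∀ y, y ∉ K → ∀ τ, v y τ = 0) (P : ℝ → ℝ) (hP : Continuous P) (hPm : Monotone P)
    (hPh : ∀ c s, 0 ≤ c → P (c * s) = c * P s)
    (φ : (Fin N → ℝ) → ℝ) (hφc : Continuous φ) (hφ0 : ∀ y ∈ A, 0 < φ y) (δ : ℝ)
    (hφ : ∀ x ∈ K, ∫ y in A, J (x - y) * P (φ y - φ x) < - (δ * φ x))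
    (D : Set (Fin N → ℝ)) (hDK : D ⊆ K) (hKD : K ⊆ closure D)
    (hineq : ∀ x ∈ D, ∀ s t, 0 ≤ s → s ≤ t →
      v x t - v x s ≤ ∫ τ in s..t, ∫ y in A, J (x - y) * P (v y τ - v x τ))
    (k : ℝ) (hk : 0 < k) (h0 : ∀ x ∈ K, v x 0 < k * φ x) :
    ∀ x ∈ K, ∀ t, 0 ≤ t → v x t < k * φ x * Real.exp (-(δ * t)) := by
  by_contra hcon
  push Not at hcon
  obtain ⟨x₁, hx₁, T, hT, hT1⟩ := hcon
  have hbc : Continuous (fun p : (Fin N → ℝ) × ℝ => k * φ p.1 * Real.exp (-(δ * p.2))) := by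
    fun_prop
  have hFc := aux_cont hK hAf hJc hJs hv hv0 P hP
  set w : (Fin N → ℝ) × ℝ → ℝ := fun p => v p.1 p.2 - k * φ p.1 * Real.exp (-(δ * p.2)) with hw
  have hwc : ContinuousOn w (K ×ˢ univ) := hv.sub hbc.continuousOn
  have hwc' : ContinuousOn w (K ×ˢ Icc 0 T) := hwc.mono (prod_mono_right (subset_univ _))
  have hcK : IsCompact (K ×ˢ Icc 0 T) := hK.prod isCompact_Icc
  have hSc : IsCompact ((K ×ˢ Icc 0 T) ∩ w ⁻¹' Ici 0) :=
    hcK.of_isClosed_subset (hwc'.preimage_isClosed_of_isClosed hcK.isClosed isClosed_Ici)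
      inter_subset_left
  obtain ⟨⟨x₀, t₀⟩, ⟨⟨hx₀, ht₀⟩, hw0⟩, hmin⟩ := hSc.exists_isMinOn
    ⟨(x₁, T), ⟨hx₁, hT, le_rfl⟩, by simpa [hw] using hT1⟩ continuous_snd.continuousOn
  simp only at hx₀ ht₀
  have hw0 : 0 ≤ w (x₀, t₀) := hw0
  have hlt : ∀ y ∈ K, ∀ t, 0 ≤ t → t < t₀ → w (y, t) < 0 := by
    intro y hy t ht htt
    by_contra hc
    have := hmin (a := (y, t)) ⟨⟨hy, ht, htt.le.trans ht₀.2⟩, not_lt.1 hc⟩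
    simp at this
    linarith
  have ht0 : 0 < t₀ := by
    rcases ht₀.1.lt_or_eq with h | h
    · exact h
    · exfalso
      have := h0 x₀ hx₀
      rw [← h] at hw0
      simp [hw] at hw0
      linarith
  have hle : ∀ y ∈ K, w (y, t₀) ≤ 0 := by
    intro y hy
    have hc : Continuous (fun t : ℝ => (y, t)) := by fun_prop
    have h1 : ContinuousOn (fun t => w (y, t)) univ :=
      hwc.comp hc.continuousOn (fun t _ => ⟨hy, mem_univ _⟩)
    have h2 : Tendsto (fun t => w (y, t)) (𝓝[<] t₀) (𝓝 (w (y, t₀))) :=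
      ((h1 t₀ (mem_univ _)).mono (subset_univ _)).tendsto
    refine le_of_tendsto h2 ?_
    filter_upwards [Ioo_mem_nhdsLT ht0] with t ht
    exact (hlt y hy t ht.1.le ht.2).le
  have heq : w (x₀, t₀) = 0 := le_antisymm (hle x₀ hx₀) hw0
  set E := Real.exp (-(δ * t₀)) with hE
  have hEpos : 0 < E := Real.exp_pos _
  have hF1 : ∫ y in A, J (x₀ - y) * P (v y t₀ - v x₀ t₀) ≤
      ∫ y in A, (k * E) * (J (x₀ - y) * P (φ y - φ x₀)) := by
    apply setIntegral_mono_on (aux_int hK hAf hJc hJs hv hv0 P hP x₀ hx₀ t₀) _ hA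
    · intro y hy
      have h1 : v y t₀ ≤ k * φ y * E := by
        by_cases hyK : y ∈ K
        · have := hle y hyK
          simp only [hw] at this
          linarith
        · rw [hv0 y hyK]
          have := hφ0 y hy
          positivity
      have h2 : v x₀ t₀ = k * φ x₀ * E := by
        simp only [hw] at heq
        linarith
      have h3 : P (v y t₀ - v x₀ t₀) ≤ k * E * P (φ y - φ x₀) := by
        rw [← hPh _ _ (by positivity)]
        apply hPm
        rw [h2]
        linarith
      calc _ ≤ J (x₀ - y) * (k * E * P (φ y - φ x₀)) := mul_le_mul_of_nonneg_left h3 (hJ0 _)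
        _ = _ := by ring
    · apply Integrable.const_mul
      apply Integrable.integrableOn
      apply Continuous.integrable_of_hasCompactSupport
      · fun_prop
      · apply HasCompactSupport.mul_right
        exact hJs.comp_homeomorph (Homeomorph.subLeft x₀)
  rw [integral_const_mul] at hF1
  have hF2 : (∫ y in A, J (x₀ - y) * P (v y t₀ - v x₀ t₀)) + δ * (k * φ x₀ * E) < 0 := by
    have := mul_lt_mul_of_pos_left (hφ x₀ hx₀) (mul_pos hk hEpos)
    nlinarith
  set H : (Fin N → ℝ) × ℝ → ℝ := fun p => (∫ y in A, J (p.1 - y) * P (v y p.2 - v p.1 p.2))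
    + δ * (k * φ p.1 * Real.exp (-(δ * p.2))) with hH
  have hHc : ContinuousOn H (K ×ˢ univ) := hFc.add (by fun_prop)
  have hHev : ∀ᶠ p in 𝓝[K ×ˢ univ] (x₀, t₀), H p < 0 :=
    (hHc (x₀, t₀) ⟨hx₀, mem_univ _⟩).eventually_lt_const hF2
  rw [nhdsWithin_prod_eq, nhdsWithin_univ] at hHev
  obtain ⟨pa, hpa, pb, hpb, hab⟩ := eventually_prod_iff.1 hHev
  obtain ⟨ε, hε, hball⟩ := Metric.eventually_nhds_iff.1 hpb
  obtain ⟨s, hs1, hs2⟩ : ∃ s, max 0 (t₀ - ε) < s ∧ s < t₀ :=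
    exists_between (max_lt ht0 (by linarith))
  have hs0 : 0 < s := (le_max_left _ _).trans_lt hs1
  have hsε : t₀ - ε < s := (le_max_right _ _).trans_lt hs1
  have key : ∀ x ∈ D, pa x → w (x, t₀) ≤ w (x, s) := by
    intro x hx hpx
    have h1 := hineq x hx s t₀ hs0.le hs2.le
    have hc : Continuous (fun t : ℝ => (x, t)) := by fun_prop
    have hFx : Continuous (fun τ => ∫ y in A, J (x - y) * P (v y τ - v x τ)) := by
      rw [← continuousOn_univ]
      exact hFc.comp hc.continuousOn (fun t _ => ⟨hDK hx, mem_univ _⟩)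
    have h2 : ∫ τ in s..t₀, δ * (k * φ x * Real.exp (-(δ * τ))) =
        -(k * φ x * Real.exp (-(δ * t₀))) - -(k * φ x * Real.exp (-(δ * s))) := by
      apply intervalIntegral.integral_eq_sub_of_hasDerivAt
      · intro τ _
        have := ((((hasDerivAt_id τ).const_mul δ).neg.exp).const_mul (k * φ x)).neg
        refine HasDerivAt.congr_deriv (f := fun τ => -(k * φ x * Real.exp (-(δ * τ)))) this ?_
        simp only [Pi.neg_apply, id]
        ring
      · exact Continuous.intervalIntegrable (by fun_prop) _ _
    have h3 : ∫ τ in s..t₀, H (x, τ) ≤ ∫ τ in s..t₀, (0 : ℝ) := by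
      apply intervalIntegral.integral_mono_on hs2.le
      · exact Continuous.intervalIntegrable (hFx.add (by fun_prop)) _ _
      · simp
      · intro τ hτ
        apply le_of_lt
        apply hab hpx
        apply hball
        rw [Real.dist_eq, abs_lt]
        constructor <;> linarith [hτ.1, hτ.2]
    rw [hH] at h3
    simp only at h3
    rw [intervalIntegral.integral_add (hFx.intervalIntegrable _ _)
      (Continuous.intervalIntegrable (by fun_prop) _ _), h2] at h3
    simp at h3
    simp only [hw]
    linarith
  have hne : (𝓝[D] x₀).NeBot := mem_closure_iff_nhdsWithin_neBot.1 (hKD hx₀)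
  have hcont : ∀ t, Tendsto (fun x => w (x, t)) (𝓝[D] x₀) (𝓝 (w (x₀, t))) := by
    intro t
    have hc : Continuous (fun x : Fin N → ℝ => (x, t)) := by fun_prop
    have h1 : ContinuousOn (fun x => w (x, t)) K :=
      hwc.comp hc.continuousOn (fun x hx => ⟨hx, mem_univ _⟩)
    exact ((h1 x₀ hx₀).mono hDK).tendsto
  have hfin : w (x₀, t₀) ≤ w (x₀, s) := by
    refine le_of_tendsto_of_tendsto (hcont t₀) (hcont s) ?_
    filter_upwards [self_mem_nhdsWithin, nhdsWithin_mono _ hDK hpa] with x hx hx2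
    exact key x hx hx2
  linarith [hlt x₀ hx₀ s hs0.le hs2]

lemma aux_neg {N : ℕ} (i : Fin N) {J : (Fin N → ℝ) → ℝ} (hJ : HypJ N J) :
    ∫ z, J z * min (z i) 0 < 0 := by
  obtain ⟨hJ0, hJr, hJc, hJs, hJ1, -⟩ := hJ
  have hex : ∃ z, J z ≠ 0 := by
    by_contra hc
    push Not at hc
    simp [hc] at hJ1
  obtain ⟨z, hz⟩ := hex
  have hex2 : ∃ z, J z ≠ 0 ∧ z i ≤ 0 := by
    rcases le_total (z i) 0 with h | h
    · exact ⟨z, hz, h⟩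
    · refine ⟨-z, ?_, by simpa using h⟩
      rwa [hJr (-z) z (by simp)]
  obtain ⟨z, hz, hzi⟩ := hex2
  have hex3 : ∃ z, J z ≠ 0 ∧ z i < 0 := by
    have hc : Continuous (fun ε : ℝ => J (z - ε • (fun _ => 1))) := by fun_prop
    have h1 : ∀ᶠ ε : ℝ in 𝓝 0, J (z - ε • (fun _ => 1)) ≠ 0 :=
      hc.continuousAt.eventually_ne (by simpa using hz)
    obtain ⟨ε, h2, h3⟩ := ((h1.filter_mono nhdsWithin_le_nhds).and
      (self_mem_nhdsWithin (s := Ioi (0:ℝ)))).exists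
    refine ⟨_, h2, ?_⟩
    simp at h3 ⊢
    linarith
  obtain ⟨z, hz, hzi⟩ := hex3
  have hpos : 0 < ∫ z, J z * -(min (z i) 0) := by
    apply Continuous.integral_pos_of_hasCompactSupport_nonneg_nonzero (x := z)
    · fun_prop
    · exact hJs.mul_right
    · intro y
      exact mul_nonneg (hJ0 y) (by simp)
    · rw [min_eq_left hzi.le]
      exact mul_ne_zero hz (by linarith)
  simp only [mul_neg, integral_neg] at hpos
  linarith

lemma aux_barrier {N : ℕ} (i : Fin N) {J : (Fin N → ℝ) → ℝ} (hJ : HypJ N J)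
    {K A : Set (Fin N → ℝ)} (hKb : Bornology.IsBounded K) (hAb : Bornology.IsBounded A)
    (hKA : ∀ x ∈ K, ∀ y, y ∉ A → J (x - y) = 0) (α₁ α₂ : ℝ) (h1 : 0 < α₁) (h2 : α₁ ≤ α₂) :
    ∃ φ : (Fin N → ℝ) → ℝ, ∃ δ B : ℝ, 0 < δ ∧ Continuous φ ∧ (∀ y ∈ K ∪ A, 1 ≤ φ y) ∧
      (∀ y, φ y ≤ B) ∧
      ∀ x ∈ K, ∫ y in A, J (x - y) * max (α₁ * (φ y - φ x)) (α₂ * (φ y - φ x)) < -(δ * φ x) := by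
  have hm := aux_neg i hJ
  obtain ⟨hJ0, hJr, hJc, hJs, hJ1, -⟩ := hJ
  set m := ∫ z, J z * min (z i) 0 with hmdef
  obtain ⟨k, hk0, hk⟩ : ∃ k : ℝ, 0 < k ∧ α₂ + α₁ * k * m < 0 := by
    refine ⟨(α₂ + 1) / (α₁ * -m), ?_, ?_⟩
    · apply div_pos (by linarith) (mul_pos h1 (by linarith))
    · have : α₁ * ((α₂ + 1) / (α₁ * -m)) * m = -(α₂ + 1) := by
        have : m ≠ 0 := hm.ne
        field_simp
      rw [this]; linarith
  obtain ⟨R, hR⟩ := (hKb.union hAb).exists_norm_le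
  have hRi : ∀ y ∈ K ∪ A, |y i| ≤ R := fun y hy => (norm_le_pi_norm y i).trans (hR y hy)
  set I := ∫ z, J z * max (α₁ * (1 - Real.exp (-(k * z i)))) (α₂ * (1 - Real.exp (-(k * z i))))
    with hI
  have hIneg : I < 0 := by
    refine lt_of_le_of_lt ?_ hk
    have hi1 : Integrable J := hJc.integrable_of_hasCompactSupport hJs
    have hi2 : Integrable (fun z => J z * min (z i) 0) :=
      Continuous.integrable_of_hasCompactSupport (by fun_prop) hJs.mul_right
    have : α₂ + α₁ * k * m = ∫ z, (α₂ * J z + α₁ * k * (J z * min (z i) 0)) := by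
      rw [integral_add (hi1.const_mul _) (hi2.const_mul _), integral_const_mul,
        integral_const_mul, hJ1, mul_one]
    rw [this]
    apply integral_mono
    · exact Continuous.integrable_of_hasCompactSupport (by fun_prop) hJs.mul_right
    · exact (hi1.const_mul _).add (hi2.const_mul _)
    · intro z
      have hb : max (α₁ * (1 - Real.exp (-(k * z i)))) (α₂ * (1 - Real.exp (-(k * z i))))
          ≤ α₂ + α₁ * k * min (z i) 0 := by
        have he := Real.exp_pos (-(k * z i))
        have he1 := Real.add_one_le_exp (-(k * z i))
        rcases le_total (z i) 0 with h | h
        · rw [min_eq_left h]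
          have hkz : k * z i ≤ 0 := mul_nonpos_of_nonneg_of_nonpos hk0.le h
          have h3 : 1 - Real.exp (-(k * z i)) ≤ k * z i := by linarith
          have h4 : α₁ * (1 - Real.exp (-(k * z i))) ≤ α₁ * (k * z i) :=
            mul_le_mul_of_nonneg_left h3 h1.le
          apply max_le
          · nlinarith
          · nlinarith
        · rw [min_eq_right h]
          apply max_le <;> nlinarith
      calc _ ≤ J z * (α₂ + α₁ * k * min (z i) 0) := mul_le_mul_of_nonneg_left hb (hJ0 z)
        _ = _ := by ring
  set B := 1 + Real.exp (k * R) with hB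
  have hBpos : 0 < B := by positivity
  refine ⟨fun y => B - Real.exp (k * y i), Real.exp (-(k * R)) * -I / (2 * B), B, ?_, by fun_prop,
    ?_, ?_, ?_⟩
  · have : 0 < -I := by linarith
    positivity
  · intro y hy
    have : Real.exp (k * y i) ≤ Real.exp (k * R) := by
      apply Real.exp_le_exp.2
      exact mul_le_mul_of_nonneg_left (abs_le.1 (hRi y hy)).2 hk0.le
    simp only [hB]; linarith
  · intro y
    have := Real.exp_pos (k * y i)
    simp only
    linarith
  · intro x hx
    have hint : ∫ y in A, J (x - y) * max (α₁ * ((B - Real.exp (k * y i)) - (B - Real.exp (k * x i))))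
        (α₂ * ((B - Real.exp (k * y i)) - (B - Real.exp (k * x i)))) = Real.exp (k * x i) * I := by
      rw [setIntegral_eq_integral_of_forall_compl_eq_zero
        (fun y hy => by rw [hKA x hx y hy, zero_mul]), hI, ← integral_const_mul]
      rw [← integral_sub_left_eq_self (fun z => Real.exp (k * x i) * (J z *
        max (α₁ * (1 - Real.exp (-(k * z i)))) (α₂ * (1 - Real.exp (-(k * z i)))))) volume x]
      congr 1
      ext y
      have he : Real.exp (k * y i) = Real.exp (k * x i) * Real.exp (-(k * (x - y) i)) := by
        rw [← Real.exp_add]; congr 1; simp; ring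
      have hq : (B - Real.exp (k * y i)) - (B - Real.exp (k * x i)) =
        Real.exp (k * x i) * (1 - Real.exp (-(k * (x - y) i))) := by rw [he]; ring
      rw [hq, mul_left_comm α₁, mul_left_comm α₂, ← mul_max_of_nonneg _ _ (Real.exp_pos _).le]
      ring
    simp only
    rw [hint]
    have h3 : Real.exp (-(k * R)) ≤ Real.exp (k * x i) := by
      apply Real.exp_le_exp.2
      have := (abs_le.1 (hRi x (Or.inl hx))).1
      nlinarith
    have h4 : Real.exp (k * x i) * I ≤ Real.exp (-(k * R)) * I :=
      mul_le_mul_of_nonpos_right h3 hIneg.le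
    have h5 : Real.exp (-(k * R)) * -I / (2 * B) * (B - Real.exp (k * x i)) ≤
        Real.exp (-(k * R)) * -I / (2 * B) * B := by
      apply mul_le_mul_of_nonneg_left
      · have := Real.exp_pos (k * x i); linarith
      · have : 0 < -I := by linarith
        positivity
    have h6 : Real.exp (-(k * R)) * -I / (2 * B) * B = Real.exp (-(k * R)) * -I / 2 := by
      field_simp
    have h7 : 0 < Real.exp (-(k * R)) * -I := mul_pos (Real.exp_pos _) (by linarith)
    nlinarith

/-- **Uniform decay to zero of the regular solution with constant initial datum `λ ≠ 0`**
of the homogeneous nonlocal Dirichlet problem. -/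
theorem decay_constant_initial_datum
    (N : ℕ) (hN : 1 ≤ N) (Ω : Set (Fin N → ℝ)) (hΩopen : IsOpen Ω)
    (hΩbdd : Bornology.IsBounded Ω)
    (J : (Fin N → ℝ) → ℝ) (hJ : HypJ N J)
    (G : (Fin N → ℝ) → ℝ → ℝ) (hG : HypG N G)
    (lam : ℝ) (hlam : lam ≠ 0)
    (u : (Fin N → ℝ) → ℝ → ℝ) (hu : RegularSolutionHom N J G Ω (fun _ => lam) u) :
    TendstoUniformlyOn (fun t x => u x t) (fun _ => (0 : ℝ)) atTop (closure Ω) := by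
  have hJ' := hJ
  obtain ⟨hJ0, hJr, hJc, hJs, hJ1, -⟩ := hJ
  obtain ⟨-, hGc, α₁, α₂, hα1, hα2, hGm⟩ := hG
  obtain ⟨huc, hueq, huz, huni⟩ := hu
  set K := closure Ω with hKdef
  set A := Ω + tsupport J with hAdef
  have hK : IsCompact K := hΩbdd.isCompact_closure
  have hAo : IsOpen A := hΩopen.add_right
  have hAb : Bornology.IsBounded A := hΩbdd.add hJs.isCompact.isBounded
  have hAf : volume A < ⊤ := hAb.measure_lt_top
  have hKA : ∀ x ∈ K, ∀ y, y ∉ A → J (x - y) = 0 := by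
    intro x hx y hy
    by_contra hne
    have hc : Continuous (fun z => J (z - y)) := by fun_prop
    have h1 : ∀ᶠ z in 𝓝 x, J (z - y) ≠ 0 := hc.continuousAt.eventually_ne hne
    obtain ⟨z, hz, hzΩ⟩ := mem_closure_iff_nhds.1 hx _ h1
    apply hy
    refine ⟨z, hzΩ, y - z, subset_tsupport _ ?_, by simp⟩
    have : J (y - z) = J (z - y) := hJr _ _ (by
      apply Finset.sum_congr rfl
      intro j _
      simp only [Pi.sub_apply]
      ring)
    rw [Function.mem_support, this]
    exact hz
  obtain ⟨φ, δ, B, hδ, hφc, hφ1, hφB, hφ⟩ := aux_barrier ⟨0, hN⟩ hJ' hK.isBounded hAb hKA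
    α₁ α₂ hα1 hα2
  have hgood := hGc.and hGm
  set D := Ω ∩ {x | (Continuous fun s : ℝ => G x s) ∧ ∀ s σ : ℝ, σ < s →
      α₁ * (s - σ) ≤ G x s * s - G x σ * σ ∧ G x s * s - G x σ * σ ≤ α₂ * (s - σ)} with hD
  have hDK : D ⊆ K := inter_subset_left.trans subset_closure
  have hKD : K ⊆ closure D :=
    closure_minimal ((Measure.dense_of_ae hgood).open_subset_closure_inter hΩopen) isClosed_closure
  have hu0 : ∀ x ∈ K, u x 0 = lam := by
    intro x hx
    have h1 := huni.tendsto_at hx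
    have hc : Continuous (fun t : ℝ => (x, t)) := by fun_prop
    have h2 : ContinuousOn (fun t => u x t) (Ici 0) :=
      huc.comp hc.continuousOn (fun t ht => ⟨hx, ht⟩)
    exact tendsto_nhds_unique (((h2 0 self_mem_Ici).mono Ioi_subset_Ici_self).tendsto) h1
  have main : ∀ c : ℝ, c * c = 1 → ∀ x ∈ K, ∀ t, 0 ≤ t →
      c * u x t ≤ (|lam| + 1) * B * Real.exp (-(δ * t)) := by
    intro c hc
    classical
    set v : (Fin N → ℝ) → ℝ → ℝ := fun y τ => if y ∈ K then c * u y (max τ 0) else 0 with hvdef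
    have hv0 : ∀ y, y ∉ K → ∀ τ, v y τ = 0 := fun y hy τ => by simp [hvdef, hy]
    have hvK : ∀ y ∈ K, ∀ τ, 0 ≤ τ → v y τ = c * u y τ := fun y hy τ hτ => by
      simp [hvdef, hy, hτ]
    have hv : ContinuousOn (fun p : (Fin N → ℝ) × ℝ => v p.1 p.2) (K ×ˢ univ) := by
      have h1 : ContinuousOn (fun p : (Fin N → ℝ) × ℝ => c * u p.1 (max p.2 0)) (K ×ˢ univ) := by
        apply continuousOn_const.mul
        exact huc.comp (f := fun p : (Fin N → ℝ) × ℝ => (p.1, max p.2 0))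
          (by fun_prop) (fun p hp => ⟨hp.1, mem_Ici.2 (le_max_right _ _)⟩)
      refine h1.congr fun p hp => ?_
      simp [hvdef, hp.1]
    have hcabs : |c| = 1 := by
      rcases mul_self_eq_one_iff.1 hc with h | h <;> simp [h]
    have hPc : Continuous (fun s : ℝ => max (α₁ * s) (α₂ * s)) := by fun_prop
    have hineq : ∀ x ∈ D, ∀ s t, 0 ≤ s → s ≤ t → v x t - v x s ≤
        ∫ τ in s..t, ∫ y in A, J (x - y) *
          (fun s : ℝ => max (α₁ * s) (α₂ * s)) (v y τ - v x τ) := by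
      intro x hx s t hs hst
      have hxK := hDK hx
      obtain ⟨-, hGx, hGx2⟩ := hx
      set Q : ℝ → ℝ := fun s => s * G x (c * s) with hQ
      have hQc : Continuous Q := continuous_id.mul (hGx.comp (by fun_prop))
      have hQP : ∀ s, Q s ≤ max (α₁ * s) (α₂ * s) := by
        intro s
        have hb : ∀ r : ℝ, r ≠ 0 → α₁ ≤ G x r ∧ G x r ≤ α₂ := by
          intro r hr
          rcases hr.lt_or_gt with h | h
          · have := hGx2 0 r h
            constructor <;> nlinarith
          · have := hGx2 r 0 h
            constructor <;> nlinarith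
        simp only [hQ]
        rcases lt_trichotomy s 0 with h | h | h
        · have := hb (c * s) (by
            apply mul_ne_zero _ h.ne
            rintro rfl; simp at hc)
          apply le_max_of_le_left; nlinarith
        · simp [h]
        · have := hb (c * s) (by
            apply mul_ne_zero _ h.ne'
            rintro rfl; simp at hc)
          apply le_max_of_le_right; nlinarith
      have hct : Continuous (fun t : ℝ => (x, t)) := by fun_prop
      have hcx : ∀ P : ℝ → ℝ, Continuous P →
          Continuous (fun τ => ∫ y in A, J (x - y) * P (v y τ - v x τ)) := by
        intro P hP
        rw [← continuousOn_univ]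
        exact (aux_cont hK hAf hJc hJs hv hv0 P hP).comp hct.continuousOn
          (fun t _ => ⟨hxK, mem_univ _⟩)
      have hrep : ∀ t, 0 ≤ t → v x t =
          (∫ τ in (0:ℝ)..t, ∫ y in A, J (x - y) * Q (v y τ - v x τ)) + c * lam := by
        intro t ht
        rcases ht.eq_or_lt with h | h
        · subst h
          rw [hvK x hxK 0 le_rfl, hu0 x hxK]; simp
        · rw [hvK x hxK t ht, hueq x hxK t h, mul_add, intervalIntegral.integral_of_le ht,
            ← integral_const_mul]
          congr 1
          apply setIntegral_congr_fun measurableSet_Ioc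
          intro τ hτ
          simp only
          rw [← integral_const_mul]
          apply setIntegral_congr_fun hAo.measurableSet
          intro y hy
          have hvy : v y τ = c * u y τ := by
            by_cases hyK : y ∈ K
            · exact hvK y hyK τ hτ.1.le
            · rw [hv0 y hyK, huz y ⟨hy, hyK⟩ τ hτ.1]; simp
          simp only [hQ]
          rw [hvy, hvK x hxK τ hτ.1.le]
          have : c * (c * u y τ - c * u x τ) = u y τ - u x τ := by
            linear_combination (u y τ - u x τ) * hc
          rw [this]; ring
      have hii : ∀ a b, IntervalIntegrable
          (fun τ => ∫ y in A, J (x - y) * Q (v y τ - v x τ)) volume a b :=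
        fun a b => (hcx Q hQc).intervalIntegrable _ _
      have hsub : v x t - v x s = ∫ τ in s..t, ∫ y in A, J (x - y) * Q (v y τ - v x τ) := by
        rw [hrep t (hs.trans hst), hrep s hs, add_sub_add_right_eq_sub,
          intervalIntegral.integral_interval_sub_left (hii _ _) (hii _ _)]
      rw [hsub]
      apply intervalIntegral.integral_mono_on hst (hii _ _) ((hcx _ hPc).intervalIntegrable _ _)
      intro τ _
      apply setIntegral_mono (aux_int hK hAf hJc hJs hv hv0 Q hQc x hxK τ)
        (aux_int hK hAf hJc hJs hv hv0 _ hPc x hxK τ)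
      intro y
      exact mul_le_mul_of_nonneg_left (hQP _) (hJ0 _)
    have hcmp := aux_compare hK hAo.measurableSet hAf hJc hJs hJ0 hv hv0
      (fun s : ℝ => max (α₁ * s) (α₂ * s)) hPc
      (fun a b hab => max_le_max (mul_le_mul_of_nonneg_left hab hα1.le)
        (mul_le_mul_of_nonneg_left hab (hα1.le.trans hα2)))
      (fun r s hr => by
        rw [mul_max_of_nonneg _ _ hr, mul_left_comm, mul_left_comm r α₂])
      φ hφc (fun y hy => lt_of_lt_of_le one_pos (hφ1 y (Or.inr hy))) δ hφ D hDK hKD hineq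
      (|lam| + 1) (by positivity) (by
        intro x hx
        rw [hvK x hx 0 le_rfl, hu0 x hx]
        have h1 : c * lam ≤ |lam| := (le_abs_self _).trans (by rw [abs_mul, hcabs, one_mul])
        have h2 := hφ1 x (Or.inl hx)
        have h3 := abs_nonneg lam
        nlinarith)
    intro x hx t ht
    have h1 := hcmp x hx t ht
    rw [hvK x hx t ht] at h1
    refine h1.le.trans ?_
    have := hφB x
    gcongr
  have hlim : Tendsto (fun t : ℝ => (|lam| + 1) * B * Real.exp (-(δ * t))) atTop (𝓝 0) := by
    have h1 : Tendsto (fun t : ℝ => -(δ * t)) atTop atBot :=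
      tendsto_neg_atTop_atBot.comp (tendsto_id.const_mul_atTop hδ)
    simpa using (Real.tendsto_exp_atBot.comp h1).const_mul ((|lam| + 1) * B)
  rw [Metric.tendstoUniformlyOn_iff]
  intro ε hε
  filter_upwards [hlim.eventually_lt_const hε, eventually_ge_atTop 0] with t ht ht0 x hx
  have h1 := main 1 (by norm_num) x hx t ht0
  have h2 := main (-1) (by norm_num) x hx t ht0
  rw [dist_comm, Real.dist_eq, sub_zero, abs_lt]
  constructor <;> linarith
end
end

section
/- Let Ω ⊂ ℝ^N be a bounded open set, Ω_J = Ω + supp J, assume J satisfies hypothesis (J) and G satisfies hypothesis (G). Then for every initial datum u₀ ∈ C(Ω̄) with u₀ ≥ 0, the regular solution u of the homogeneous Dirichlet problem ∂u/∂t(x,t) = ∫_{Ω_J} J(x−y)(u(y,t)−u(x,t)) G(x, u(y,t)−u(x,t)) dy in Ω̄ × (0,∞), u(x,t) = 0 in (Ω_J \ Ω̄) × (0,∞), u(x,0) = u₀(x) in Ω̄, satisfies lim_{t→∞} u(·,t) = 0 uniformly on Ω̄. -/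
open MeasureTheory Set Filter Topology Pointwise

noncomputable section

lemma aux_int_s6 {N : ℕ} {J : (Fin N → ℝ) → ℝ} (hc : Continuous J) (hs : HasCompactSupport J)
    (x : Fin N → ℝ) {f : (Fin N → ℝ) → ℝ} (hf : Continuous f) :
    Integrable fun y => J (x - y) * f y := by
  apply Continuous.integrable_of_hasCompactSupport
  · fun_prop
  · exact (hs.comp_homeomorph (Homeomorph.subLeft x)).mul_right

lemma aux_second {N : ℕ} {J : (Fin N → ℝ) → ℝ} (hJ : HypJ N J) (i : Fin N) :
    0 < ∫ z, J z * z i ^ 2 := by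
  obtain ⟨h0, hr, hc, hs, h1, -⟩ := hJ
  by_contra hcon
  have hz : ∀ z : Fin N → ℝ, J z * z i ^ 2 = 0 := by
    intro z
    by_contra hne
    exact hcon (Continuous.integral_pos_of_hasCompactSupport_nonneg_nonzero (x := z)
      (f := fun z => J z * z i ^ 2) (by fun_prop) hs.mul_right
      (fun z => mul_nonneg (h0 z) (sq_nonneg _)) hne)
  have hJ0 : ∀ z, J z = 0 := by
    intro z
    have hcont : Continuous fun t : ℝ => J (Function.update z i t) := by fun_prop
    have := Continuous.ext_on (dense_compl_singleton (0 : ℝ)) hcont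
      (continuous_const (y := (0 : ℝ))) (by
        intro t ht
        have := hz (Function.update z i t)
        simpa [ht, show t ≠ 0 from ht] using this)
    have := congrFun this (z i)
    simpa using this
  simp [hJ0] at h1

lemma aux_exp {N : ℕ} {J : (Fin N → ℝ) → ℝ} (hJ : HypJ N J) (i : Fin N) (D : ℝ) :
    ∃ l : ℝ, 0 < l ∧ D ≤ ∫ z, J z * Real.exp (l * z i) := by
  have hC := aux_second hJ i
  obtain ⟨h0, hr, hc, hs, h1, h2⟩ := hJ
  set C := ∫ z, J z * z i ^ 2 with hCdef
  obtain ⟨l, hl1, hl2⟩ : ∃ l : ℝ, 1 ≤ l ∧ 4 * D / C ≤ l :=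
    ⟨max 1 (4 * D / C), le_max_left _ _, le_max_right _ _⟩
  refine ⟨l, by linarith, ?_⟩
  have hI : ∀ k : ℝ, Integrable fun z : Fin N → ℝ => J z * Real.exp (k * z i) := fun k =>
    Continuous.integrable_of_hasCompactSupport (by fun_prop) hs.mul_right
  have heven : ∫ z, J z * Real.exp (-l * z i) = ∫ z, J z * Real.exp (l * z i) := by
    rw [← integral_neg_eq_self (fun z => J z * Real.exp (l * z i))]
    congr 1; ext z
    rw [hr (-z) z (by simp)]
    simp
  have key : ∫ z, (l ^ 2 / 2) * (J z * z i ^ 2) ≤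
      ∫ z, (J z * Real.exp (l * z i) + J z * Real.exp (-l * z i)) := by
    apply integral_mono ((h2 i).const_mul _) ((hI l).add (hI (-l)))
    intro z
    have h3 : (l * z i) ^ 2 / 2 ≤ Real.exp (l * z i) + Real.exp (-l * z i) := by
      rcases le_total 0 (l * z i) with h | h
      · have := Real.quadratic_le_exp_of_nonneg h
        have := Real.exp_pos (-l * z i)
        linarith
      · have := Real.quadratic_le_exp_of_nonneg (x := -l * z i) (by linarith)
        have := Real.exp_pos (l * z i)
        nlinarith
    have := mul_le_mul_of_nonneg_left h3 (h0 z)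
    simp only [Pi.add_apply]
    nlinarith
  rw [integral_const_mul, integral_add (hI l) (hI (-l)), heven, ← hCdef] at key
  have h4 : 4 * D ≤ l * C := by rwa [div_le_iff₀ hC] at hl2
  have : l * C ≤ l ^ 2 * C := by
    nlinarith [mul_nonneg (mul_nonneg (sub_nonneg.2 hl1) (by linarith : (0 : ℝ) ≤ l)) hC.le]
  linarith

lemma aux_barrier_s6 {N : ℕ} (hN : 1 ≤ N) {J : (Fin N → ℝ) → ℝ} (hJ : HypJ N J)
    {E : Set (Fin N → ℝ)} (hE : Bornology.IsBounded E) {a b : ℝ} (ha : 0 < a) (hab : a ≤ b) :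
    ∃ (p : (Fin N → ℝ) → ℝ) (c M : ℝ), 0 < c ∧ Continuous p ∧ (∀ y ∈ E, 1 ≤ p y) ∧
      (∀ y, p y ≤ M) ∧
      ∀ x ∈ E, ∫ y, J (x - y) * max (a * (p y - p x)) (b * (p y - p x)) ≤ -c * p x := by
  let i : Fin N := ⟨0, hN⟩
  obtain ⟨l, hl, hD⟩ := aux_exp hJ i ((a + b + 1) / a)
  obtain ⟨h0, hr, hc, hs, h1, h2⟩ := hJ
  obtain ⟨R, hR⟩ := hE.exists_norm_le
  have hRi : ∀ y ∈ E, |y i| ≤ R := fun y hy => (norm_le_pi_norm y i).trans (hR y hy)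
  set B := 1 + Real.exp (l * R) with hB
  have hBpos : 0 < B := by positivity
  refine ⟨fun y => B - Real.exp (-(l * y i)), Real.exp (-(l * R)) / B, B, by positivity,
    by fun_prop, ?_, ?_, ?_⟩
  · intro y hy
    have h3 := (abs_le.1 (hRi y hy)).1
    have : Real.exp (-(l * y i)) ≤ Real.exp (l * R) := Real.exp_le_exp.2 (by nlinarith)
    simp only; linarith
  · intro y
    have := Real.exp_pos (-(l * y i))
    simp only; linarith
  · intro x hx
    set e := Real.exp (-(l * x i)) with he
    have hepos : 0 < e := Real.exp_pos _
    have hfac : ∀ y : Fin N → ℝ,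
        Real.exp (-(l * y i)) = e * Real.exp (l * (x - y) i) := by
      intro y
      rw [he, ← Real.exp_add]; congr 1; simp; ring
    have hle : ∫ y, J (x - y) * max (a * (B - Real.exp (-(l * y i)) - (B - e)))
          (b * (B - Real.exp (-(l * y i)) - (B - e))) ≤
        ∫ y, (fun z => e * ((a + b) * J z - a * (J z * Real.exp (l * z i)))) (x - y) := by
      apply integral_mono
      · exact aux_int_s6 hc hs x (by fun_prop)
      · have := aux_int_s6 (J := J) hc hs x (f := fun y => e * ((a + b) -
          a * (Real.exp (l * (x - y) i)))) (by fun_prop)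
        refine this.congr (Eventually.of_forall fun y => ?_)
        simp only; ring
      · intro y
        simp only
        rw [hfac y]
        set w := Real.exp (l * (x - y) i)
        have hw : 0 < w := Real.exp_pos _
        have : max (a * (B - e * w - (B - e))) (b * (B - e * w - (B - e))) ≤
            e * ((a + b) - a * w) := by
          have hew : 0 < e * w := by positivity
          apply max_le
          · nlinarith [mul_pos hepos (ha.trans_le hab)]
          · nlinarith [mul_nonneg (sub_nonneg.2 hab) hew.le, mul_pos hepos ha]
        calc _ ≤ _ := mul_le_mul_of_nonneg_left this (h0 (x - y))
          _ = _ := by ring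
    rw [integral_sub_left_eq_self
      (fun z => e * ((a + b) * J z - a * (J z * Real.exp (l * z i)))) volume x,
      integral_const_mul, integral_sub, integral_const_mul, integral_const_mul, h1] at hle
    · have h3 : a + b + 1 ≤ a * ∫ z, J z * Real.exp (l * z i) := by
        rw [div_le_iff₀ ha] at hD; linarith
      have h4 : Real.exp (-(l * R)) ≤ e := by
        apply Real.exp_le_exp.2
        have h3 := (abs_le.1 (hRi x hx)).2
        nlinarith
      have h5 : Real.exp (-(l * R)) / B * (B - e) ≤ Real.exp (-(l * R)) := by
        rw [div_mul_eq_mul_div, div_le_iff₀ hBpos]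
        have := Real.exp_pos (-(l * R))
        nlinarith
      refine hle.trans ?_
      nlinarith
    · exact (Continuous.integrable_of_hasCompactSupport hc hs).const_mul _
    · exact (Continuous.integrable_of_hasCompactSupport (by fun_prop) hs.mul_right).const_mul _

lemma aux_cont_s6 {N : ℕ} {J : (Fin N → ℝ) → ℝ} (hc : Continuous J) (hs : HasCompactSupport J)
    {K : Set (Fin N → ℝ)} (hK : IsCompact K) {U : (Fin N → ℝ) → ℝ → ℝ}
    (hU : ContinuousOn (fun q : (Fin N → ℝ) × ℝ => U q.1 q.2) (K ×ˢ univ))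
    (hU0 : ∀ y ∉ K, ∀ t, U y t = 0) {g : ℝ → ℝ} (hg : Continuous g) (x : Fin N → ℝ) :
    (∀ t, Integrable fun y => J (x - y) * g (U y t - U x t)) ∧
    Continuous fun t => ∫ y, J (x - y) * g (U y t - U x t) := by
  have hUt : ∀ y, Continuous (U y) := by
    intro y
    by_cases hy : y ∈ K
    · rw [← continuousOn_univ]
      exact hU.comp (f := fun t => (y, t)) (by fun_prop) (fun t _ => ⟨hy, mem_univ _⟩)
    · rw [show U y = fun _ => 0 from funext (hU0 y hy)]
      exact continuous_const
  have hmeas : ∀ t, Measurable fun y => U y t := by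
    intro t
    classical
    have : (fun y => U y t) = K.piecewise (fun y => U y t) (fun _ => 0) := by
      ext y
      by_cases hy : y ∈ K
      · simp [hy]
      · simp [hy, hU0 y hy]
    rw [this]
    apply ContinuousOn.measurable_piecewise _ continuousOn_const hK.measurableSet
    exact hU.comp (f := fun y => (y, t)) (by fun_prop) (fun y hy => ⟨hy, mem_univ _⟩)
  have hFm : ∀ t, AEStronglyMeasurable (fun y => J (x - y) * g (U y t - U x t)) volume := by
    intro t
    apply Measurable.aestronglyMeasurable
    exact (hc.measurable.comp (measurable_const.sub measurable_id)).mul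
      (hg.measurable.comp ((hmeas t).sub_const _))
  have hbd : ∀ t₀ : ℝ, ∃ D : ℝ, ∀ t ∈ Icc (t₀ - 1) (t₀ + 1), ∀ y,
      ‖J (x - y) * g (U y t - U x t)‖ ≤ ‖J (x - y)‖ * D := by
    intro t₀
    obtain ⟨C, hC⟩ := (hK.prod (isCompact_Icc (a := t₀ - 1) (b := t₀ + 1))).exists_bound_of_continuousOn
      (hU.mono (prod_mono_right (subset_univ _)))
    have hC' : ∀ t ∈ Icc (t₀ - 1) (t₀ + 1), ∀ y, |U y t| ≤ max C 0 := by
      intro t ht y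
      by_cases hy : y ∈ K
      · exact (hC (y, t) ⟨hy, ht⟩).trans (le_max_left _ _)
      · simp [hU0 y hy]
    obtain ⟨D, hD⟩ := (isCompact_Icc (a := -(2 * max C 0)) (b := 2 * max C 0)).exists_bound_of_continuousOn
      hg.continuousOn
    refine ⟨D, fun t ht y => ?_⟩
    rw [norm_mul]
    apply mul_le_mul_of_nonneg_left _ (norm_nonneg _)
    apply hD
    have h1 := abs_le.1 (hC' t ht y)
    have h2 := abs_le.1 (hC' t ht x)
    constructor <;> linarith [h1.1, h1.2, h2.1, h2.2]
  have hbint : ∀ D : ℝ, Integrable fun y => ‖J (x - y)‖ * D := fun D =>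
    aux_int_s6 (J := fun z => ‖J z‖) hc.norm hs.norm x continuous_const
  constructor
  · intro t
    obtain ⟨D, hD⟩ := hbd t
    exact (hbint D).mono' (hFm t) (Eventually.of_forall (hD t ⟨by linarith, by linarith⟩))
  · rw [continuous_iff_continuousAt]
    intro t₀
    obtain ⟨D, hD⟩ := hbd t₀
    apply continuousAt_of_dominated (bound := fun y => ‖J (x - y)‖ * D)
    · exact Eventually.of_forall hFm
    · filter_upwards [Icc_mem_nhds (show t₀ - 1 < t₀ by linarith) (show t₀ < t₀ + 1 by linarith)]
        with t ht
      exact Eventually.of_forall (hD t ht)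
    · exact hbint D
    · refine Eventually.of_forall fun y => ?_
      have h1 := hUt y
      have h2 := hUt x
      exact Continuous.continuousAt (by fun_prop)

lemma aux_upper {N : ℕ} (hN : 1 ≤ N) {Ω : Set (Fin N → ℝ)} (hΩopen : IsOpen Ω)
    (hΩbdd : Bornology.IsBounded Ω)
    {J : (Fin N → ℝ) → ℝ} (hJ : HypJ N J)
    {G : (Fin N → ℝ) → ℝ → ℝ} (hG : HypG N G)
    {u₀ : (Fin N → ℝ) → ℝ} (hu₀c : ContinuousOn u₀ (closure Ω))
    {u : (Fin N → ℝ) → ℝ → ℝ} (hu : RegularSolutionHom N J G Ω u₀ u) :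
    ∃ A c : ℝ, 0 < c ∧ ∀ x ∈ closure Ω, ∀ t, 0 ≤ t → u x t ≤ A * Real.exp (-c * t) := by
  obtain ⟨hucont, hueq, huext, huini⟩ := hu
  obtain ⟨-, -, a, b, ha, hab, hGae⟩ := hG
  have hb : 0 < b := ha.trans_le hab
  have hJ' := hJ
  obtain ⟨h0, hr, hc, hs, h1, -⟩ := hJ'
  have hK : IsCompact (closure Ω) := hΩbdd.isCompact_closure
  have hEb : Bornology.IsBounded ((Ω + tsupport J) ∪ closure Ω) :=
    (hΩbdd.add hs.isCompact.isBounded).union hK.isBounded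
  obtain ⟨p, c, M, hcpos, hpc, hp1, hpM, hpbar⟩ := aux_barrier_s6 hN hJ hEb ha hab
  obtain ⟨A₀, hA₀⟩ := hK.exists_bound_of_continuousOn hu₀c
  set A := max A₀ 0 with hA
  have hApos : 0 ≤ A := le_max_right _ _
  -- extended function
  classical
  set U : (Fin N → ℝ) → ℝ → ℝ := fun x t => if x ∈ closure Ω then u x (max t 0) else 0 with hUdef
  have hUK : ∀ x ∈ closure Ω, ∀ t, 0 ≤ t → U x t = u x t := by
    intro x hx t ht
    simp [hUdef, hx, ht]
  have hU0 : ∀ y ∉ closure Ω, ∀ t, U y t = 0 := by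
    intro y hy t
    simp [hUdef, hy]
  have hUc : ContinuousOn (fun q : (Fin N → ℝ) × ℝ => U q.1 q.2) (closure Ω ×ˢ univ) := by
    have : ContinuousOn (fun q : (Fin N → ℝ) × ℝ => u q.1 (max q.2 0)) (closure Ω ×ˢ univ) :=
      hucont.comp (f := fun q : (Fin N → ℝ) × ℝ => (q.1, max q.2 0)) (by fun_prop)
        (fun q hq => ⟨hq.1, mem_Ici.2 (le_max_right _ _)⟩)
    refine this.congr fun q hq => ?_
    simp [hUdef, hq.1]
  have hini : ∀ x ∈ closure Ω, u x 0 = u₀ x := by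
    intro x hx
    have e1 : Tendsto (fun t => u x t) (𝓝[Ioi (0 : ℝ)] 0) (𝓝 (u₀ x)) := huini.tendsto_at hx
    have e2 : ContinuousOn (fun t => u x t) (Ici 0) :=
      hucont.comp (f := fun t => (x, t)) (by fun_prop) (fun t ht => ⟨hx, ht⟩)
    have e3 : Tendsto (fun t => u x t) (𝓝[Ioi (0 : ℝ)] 0) (𝓝 (u x 0)) :=
      (e2 0 (mem_Ici.2 le_rfl)).mono_left (nhdsWithin_mono _ Ioi_subset_Ici_self)
    exact tendsto_nhds_unique e3 e1
  have hmemE : ∀ x ∈ Ω, ∀ y, J (x - y) ≠ 0 → y ∈ Ω + tsupport J := by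
    intro x hx y hy
    refine ⟨x, hx, y - x, subset_tsupport _ ?_, by simp⟩
    rw [Function.mem_support, hr (y - x) (x - y)]
    · exact hy
    · exact Finset.sum_congr rfl fun i _ => by simp; ring
  -- good points
  set P : Set (Fin N → ℝ) := {x | ∀ s σ : ℝ, σ < s →
      a * (s - σ) ≤ G x s * s - G x σ * σ ∧ G x s * s - G x σ * σ ≤ b * (s - σ)} with hP
  have hPd : Dense P := Measure.dense_of_ae hGae
  have hdense : closure Ω ⊆ closure (Ω ∩ P) :=
    closure_minimal (hPd.open_subset_closure_inter hΩopen) isClosed_closure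
  have hsub : Ω ∩ P ⊆ closure Ω := inter_subset_left.trans subset_closure
  -- representation
  have hrep : ∀ x ∈ Ω ∩ P, ∃ I : ℝ → ℝ, Continuous I ∧
      (∀ t, I t = ∫ y, J (x - y) * (G x (U y t - U x t) * (U y t - U x t))) ∧
      (∀ t, Integrable fun y => J (x - y) * (G x (U y t - U x t) * (U y t - U x t))) ∧
      ∀ t, 0 ≤ t → U x t = (∫ τ in (0 : ℝ)..t, I τ) + u₀ x := by
    intro x hx
    have hxc : x ∈ closure Ω := hsub hx
    have hgc : Continuous fun s => G x s * s := by
      apply LipschitzWith.continuous (K := b.toNNReal)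
      apply LipschitzWith.of_le_add_mul
      intro s σ
      rw [Real.coe_toNNReal _ hb.le, Real.dist_eq]
      rcases lt_trichotomy s σ with h | h | h
      · have := (hx.2 σ s h).1
        have h2 := mul_nonneg hb.le (abs_nonneg (s - σ))
        nlinarith
      · simp [h]
      · have := (hx.2 s σ h).2
        rw [abs_of_pos (sub_pos.2 h)]
        linarith
    obtain ⟨hint, hcont⟩ := aux_cont_s6 hc hs hK hUc hU0 hgc x
    refine ⟨_, hcont, fun t => rfl, hint, ?_⟩
    intro t ht
    rcases ht.eq_or_lt with rfl | ht
    · simp [hUK x hxc, hini x hxc]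
    · rw [hUK x hxc t ht.le, hueq x hxc t ht, intervalIntegral.integral_of_le ht.le]
      congr 1
      apply setIntegral_congr_fun measurableSet_Ioc
      intro τ hτ
      simp only
      rw [← setIntegral_eq_integral_of_forall_compl_eq_zero (s := Ω + tsupport J)
        (f := fun y => J (x - y) * (G x (U y τ - U x τ) * (U y τ - U x τ)))]
      · apply setIntegral_congr_fun (hΩopen.add_right).measurableSet
        intro y hy
        have hy' : U y τ = u y τ := by
          by_cases hyK : y ∈ closure Ω
          · exact hUK y hyK τ hτ.1.le
          · rw [hU0 y hyK, huext y ⟨hy, hyK⟩ τ hτ.1]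
        simp only
        rw [hy', hUK x hxc τ hτ.1.le]
        ring
      · intro y hy
        have : J (x - y) = 0 := by
          by_contra hne
          exact hy (hmemE x hx.1 y hne)
        simp [this]
  set v : (Fin N → ℝ) → ℝ → ℝ := fun x t => A * Real.exp (-c * t) * p x with hv
  have hvnn : ∀ y ∈ Ω + tsupport J, ∀ t, 0 ≤ v y t := by
    intro y hy t
    have := hp1 y (Or.inl hy)
    simp only [hv]
    positivity
  have hmain : ∀ x ∈ closure Ω, ∀ t, 0 ≤ t → U x t ≤ v x t := by
    intro x₁ hx₁ T hT
    have hcmp : IsCompact (closure Ω ×ˢ Icc (0 : ℝ) T) := hK.prod isCompact_Icc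
    have hwc : ContinuousOn (fun q : (Fin N → ℝ) × ℝ => (U q.1 q.2 - v q.1 q.2) * Real.exp (-q.2))
        (closure Ω ×ˢ Icc (0 : ℝ) T) := by
      apply ContinuousOn.mul
      · apply (hUc.mono (prod_mono_right (subset_univ _))).sub
        apply Continuous.continuousOn
        simp only [hv]
        fun_prop
      · fun_prop
    obtain ⟨⟨xm, tm⟩, hm, hmax⟩ := hcmp.exists_isMaxOn ⟨(x₁, T), hx₁, hT, le_rfl⟩ hwc
    set S := (U xm tm - v xm tm) * Real.exp (-tm) with hS
    have hSle : ∀ x ∈ closure Ω, ∀ t ∈ Icc (0 : ℝ) T, U x t - v x t ≤ S * Real.exp t := by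
      intro x hx t ht
      have h2 : (U x t - v x t) * Real.exp (-t) ≤ S := hmax (a := (x, t)) ⟨hx, ht⟩
      rw [Real.exp_neg, ← div_eq_mul_inv, div_le_iff₀ (Real.exp_pos t)] at h2
      exact h2
    by_cases hSpos : S ≤ 0
    · have h2 := hSle x₁ hx₁ T ⟨hT, le_rfl⟩
      have := mul_nonpos_of_nonpos_of_nonneg hSpos (Real.exp_pos T).le
      linarith
    · exfalso
      push Not at hSpos
      -- improved estimate at good points
      have hgood : ∀ x ∈ Ω ∩ P, ∀ t ∈ Icc (0 : ℝ) T,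
          U x t - v x t ≤ b / (b + 1) * S * Real.exp t := by
        intro x hx
        have hxc := hsub hx
        obtain ⟨I, hIc, hIeq, hIint, hIrep⟩ := hrep x hx
        have hIle : ∀ t ∈ Icc (0 : ℝ) T, I t ≤ -c * v x t + b * (S * Real.exp t - (U x t - v x t)) := by
          intro t ht
          set k := A * Real.exp (-c * t) with hk
          have hk0 : 0 ≤ k := by positivity
          have hd0 : 0 ≤ S * Real.exp t - (U x t - v x t) := sub_nonneg.2 (hSle x hxc t ht)
          set d := S * Real.exp t - (U x t - v x t) with hd
          have hi1 : Integrable fun y => J (x - y) * max (a * (p y - p x)) (b * (p y - p x)) :=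
            aux_int_s6 hc hs x (by fun_prop)
          have hi2 : Integrable fun y => J (x - y) * (b * d) := aux_int_s6 hc hs x continuous_const
          have hstep : I t ≤ ∫ y, (k * (J (x - y) * max (a * (p y - p x)) (b * (p y - p x))) +
              J (x - y) * (b * d)) := by
            rw [hIeq]
            apply integral_mono (hIint t) ((hi1.const_mul k).add hi2)
            intro y
            simp only [Pi.add_apply]
            by_cases hJy : J (x - y) = 0
            · simp [hJy]
            have hyE := hmemE x hx.1 y hJy
            have hwy : U y t - v y t ≤ S * Real.exp t := by
              by_cases hyK : y ∈ closure Ω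
              · exact hSle y hyK t ht
              · rw [hU0 y hyK]
                have := hvnn y hyE t
                have := mul_pos hSpos (Real.exp_pos t)
                linarith
            have hvd : v y t - v x t = k * (p y - p x) := by simp only [hv, hk]; ring
            have hpt : G x (U y t - U x t) * (U y t - U x t) ≤
                k * max (a * (p y - p x)) (b * (p y - p x)) + b * d := by
              set s := U y t - U x t with hs'
              set σ := k * (p y - p x) with hσ
              have hsd : s - σ ≤ d := by rw [← hvd]; linarith
              have h3 : G x s * s - G x σ * σ ≤ b * d := by
                rcases lt_trichotomy s σ with h | h | h
                · have := (hx.2 σ s h).1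
                  have := mul_nonneg hb.le hd0
                  nlinarith
                · rw [h]
                  have := mul_nonneg hb.le hd0
                  linarith
                · have := (hx.2 s σ h).2
                  have := mul_le_mul_of_nonneg_left hsd hb.le
                  linarith
              have h4 : G x σ * σ ≤ k * max (a * (p y - p x)) (b * (p y - p x)) := by
                rw [mul_max_of_nonneg _ _ hk0]
                rcases lt_trichotomy 0 σ with h | h | h
                · have := (hx.2 σ 0 h).2
                  apply le_max_of_le_right
                  have e : k * (b * (p y - p x)) = b * σ := by rw [hσ]; ring
                  rw [e]; linarith
                · rw [← h]
                  apply le_max_of_le_right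
                  have e : k * (b * (p y - p x)) = b * σ := by rw [hσ]; ring
                  rw [e, ← h]; simp
                · have := (hx.2 0 σ h).1
                  apply le_max_of_le_left
                  have e : k * (a * (p y - p x)) = a * σ := by rw [hσ]; ring
                  rw [e]; linarith
              linarith
            calc _ ≤ _ := mul_le_mul_of_nonneg_left hpt (h0 (x - y))
              _ = _ := by ring
          rw [integral_add (hi1.const_mul k) hi2, integral_const_mul, integral_mul_const,
            integral_sub_left_eq_self J volume x, h1] at hstep
          have h5 := mul_le_mul_of_nonneg_left (hpbar x (Or.inr hxc)) hk0
          have h6 : v x t = k * p x := rfl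
          rw [h6]
          linarith
        set R : ℝ → ℝ := fun t => (∫ τ in (0 : ℝ)..t, I τ) + u₀ x with hR
        set q : ℝ → ℝ := fun t => Real.exp (b * t) * (R t - v x t) -
          S * b / (b + 1) * Real.exp ((b + 1) * t) with hq
        set q' : ℝ → ℝ := fun t => Real.exp (b * t) * b * (R t - v x t) +
          Real.exp (b * t) * (I t - (-c * v x t)) -
          S * b / (b + 1) * (Real.exp ((b + 1) * t) * (b + 1)) with hq'
        have hqd : ∀ t, HasDerivAt q (q' t) t := by
          intro t
          have d1 : HasDerivAt R (I t) t :=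
            (hIc.integral_hasStrictDerivAt 0 t).hasDerivAt.add_const _
          have d2 : ∀ k : ℝ, HasDerivAt (fun t => Real.exp (k * t)) (Real.exp (k * t) * k) t := by
            intro k
            simpa using ((hasDerivAt_id t).const_mul k).exp
          have d3 : HasDerivAt (fun t => v x t) (-c * v x t) t := by
            have := ((d2 (-c)).const_mul A).mul_const (p x)
            have e : -c * v x t = A * (Real.exp (-c * t) * -c) * p x := by
              simp only [hv]; ring
            rw [e]
            exact this
          exact ((d2 b).mul (d1.sub d3)).sub ((d2 (b + 1)).const_mul _)
        have hanti : AntitoneOn q (Icc 0 T) := by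
          apply antitoneOn_of_hasDerivWithinAt_nonpos (f' := q') (convex_Icc 0 T)
          · exact fun t _ => (hqd t).continuousAt.continuousWithinAt
          · exact fun t _ => (hqd t).hasDerivWithinAt
          · intro t ht
            have ht' := interior_subset ht
            have h2 := hIle t ht'
            rw [hIrep t ht'.1] at h2
            have h3 : S * b / (b + 1) * (Real.exp ((b + 1) * t) * (b + 1)) =
                Real.exp (b * t) * (b * (S * Real.exp t)) := by
              rw [show (b + 1) * t = b * t + t by ring, Real.exp_add]
              field_simp
            simp only [hq']
            rw [h3]
            have h4 := mul_le_mul_of_nonneg_left h2 (Real.exp_pos (b * t)).le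
            simp only [hR]
            nlinarith
        intro t ht
        have h2 := hanti ⟨le_rfl, hT⟩ ht ht.1
        have h3 : q 0 ≤ 0 := by
          have e1 : u₀ x ≤ A := (le_abs_self _).trans ((hA₀ x hxc).trans (le_max_left _ _))
          have e2 : A * 1 ≤ A * p x := mul_le_mul_of_nonneg_left (hp1 x (Or.inr hxc)) hApos
          have e3 : 0 ≤ S * b / (b + 1) := by positivity
          simp only [hq, hR, hv]
          simp
          linarith
        have h4 : q t ≤ 0 := h2.trans h3
        rw [hIrep t ht.1]
        simp only [hq] at h4
        rw [show (b + 1) * t = b * t + t by ring, Real.exp_add] at h4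
        have h5 : Real.exp (b * t) * (R t - v x t) ≤
            Real.exp (b * t) * (b / (b + 1) * S * Real.exp t) := by
          calc _ ≤ S * b / (b + 1) * (Real.exp (b * t) * Real.exp t) := by linarith
            _ = _ := by ring
        exact le_of_mul_le_mul_left h5 (Real.exp_pos _)
      -- extend by density
      have hext : U xm tm - v xm tm ≤ b / (b + 1) * S * Real.exp tm := by
        have hcx : ContinuousOn (fun x => U x tm - v x tm) (closure Ω) := by
          apply ContinuousOn.sub
          · exact hUc.comp (f := fun x => (x, tm)) (by fun_prop) (fun x hx => ⟨hx, mem_univ _⟩)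
          · simp only [hv]; fun_prop
        have hmem : xm ∈ closure (Ω ∩ P) := hdense hm.1
        have : (𝓝[Ω ∩ P] xm).NeBot := mem_closure_iff_nhdsWithin_neBot.1 hmem
        have htend : Tendsto (fun x => U x tm - v x tm) (𝓝[Ω ∩ P] xm) (𝓝 (U xm tm - v xm tm)) :=
          (hcx xm hm.1).mono_left (nhdsWithin_mono _ hsub)
        apply le_of_tendsto htend
        filter_upwards [self_mem_nhdsWithin] with x hx
        exact hgood x hx tm hm.2
      have h7 : U xm tm - v xm tm = S * Real.exp tm := by
        rw [hS, mul_assoc, ← Real.exp_add]; simp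
      rw [h7] at hext
      have h8 : S ≤ b / (b + 1) * S := le_of_mul_le_mul_right hext (Real.exp_pos _)
      rw [div_mul_eq_mul_div, le_div_iff₀ (by linarith)] at h8
      linarith
  refine ⟨A * M, c, hcpos, fun x hx t ht => ?_⟩
  rw [← hUK x hx t ht]
  refine (hmain x hx t ht).trans ?_
  have := mul_le_mul_of_nonneg_left (hpM x) (show 0 ≤ A * Real.exp (-c * t) by positivity)
  simp only [hv]
  linarith

lemma aux_neg_G {N : ℕ} {G : (Fin N → ℝ) → ℝ → ℝ} (hG : HypG N G) :
    HypG N fun x s => G x (-s) := by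
  obtain ⟨h1, h2, a, b, ha, hab, h3⟩ := hG
  refine ⟨fun s => h1 (-s), ?_, a, b, ha, hab, ?_⟩
  · filter_upwards [h2] with x hx
    exact hx.comp continuous_neg
  · filter_upwards [h3] with x hx s σ hs
    have := hx (-σ) (-s) (by linarith)
    constructor <;> linarith [this.1, this.2]

lemma aux_neg_u {N : ℕ} {J : (Fin N → ℝ) → ℝ} {G : (Fin N → ℝ) → ℝ → ℝ}
    {Ω : Set (Fin N → ℝ)} {u₀ : (Fin N → ℝ) → ℝ} {u : (Fin N → ℝ) → ℝ → ℝ}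
    (hu : RegularSolutionHom N J G Ω u₀ u) :
    RegularSolutionHom N J (fun x s => G x (-s)) Ω (fun x => -u₀ x) (fun x t => -u x t) := by
  obtain ⟨h1, h2, h3, h4⟩ := hu
  refine ⟨h1.neg, ?_, ?_, h4.neg⟩
  · intro x hx t ht
    beta_reduce
    rw [h2 x hx t ht, neg_add, ← integral_neg]
    congr 2
    ext τ
    rw [← integral_neg]
    congr 1
    ext y
    rw [show -(-u y τ - -u x τ) = u y τ - u x τ by ring]
    ring
  · intro y hy t ht
    beta_reduce
    rw [h3 y hy t ht, neg_zero]

/-- **Uniform decay to zero of the regular solution with nonnegative continuous initial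
datum** of the homogeneous nonlocal Dirichlet problem. -/
theorem decay_nonnegative_initial_datum
    (N : ℕ) (hN : 1 ≤ N) (Ω : Set (Fin N → ℝ)) (hΩopen : IsOpen Ω)
    (hΩbdd : Bornology.IsBounded Ω)
    (J : (Fin N → ℝ) → ℝ) (hJ : HypJ N J)
    (G : (Fin N → ℝ) → ℝ → ℝ) (hG : HypG N G)
    (u₀ : (Fin N → ℝ) → ℝ) (hu₀c : ContinuousOn u₀ (closure Ω))
    (hu₀pos : ∀ x ∈ closure Ω, 0 ≤ u₀ x)
    (u : (Fin N → ℝ) → ℝ → ℝ) (hu : RegularSolutionHom N J G Ω u₀ u) :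
    TendstoUniformlyOn (fun t x => u x t) (fun _ => (0 : ℝ)) atTop (closure Ω) := by
  obtain ⟨A, c, hc, h1⟩ := aux_upper hN hΩopen hΩbdd hJ hG hu₀c hu
  obtain ⟨B, d, hd, h2⟩ := aux_upper hN hΩopen hΩbdd hJ (aux_neg_G hG) hu₀c.neg (aux_neg_u hu)
  have key : ∀ A c : ℝ, 0 < c → Tendsto (fun t => A * Real.exp (-c * t)) atTop (𝓝 0) := by
    intro A c hc
    have : Tendsto (fun t : ℝ => Real.exp (-c * t)) atTop (𝓝 0) :=
      Real.tendsto_exp_atBot.comp (tendsto_id.const_mul_atTop_of_neg (by linarith))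
    simpa using this.const_mul A
  rw [Metric.tendstoUniformlyOn_iff]
  intro ε hε
  filter_upwards [(key A c hc).eventually (gt_mem_nhds hε),
    (key B d hd).eventually (gt_mem_nhds hε), eventually_ge_atTop 0] with t e1 e2 ht x hx
  rw [dist_comm, Real.dist_eq, sub_zero, abs_lt]
  have := h1 x hx t ht
  have := h2 x hx t ht
  constructor <;> linarith
end
end

section
/- Assume J satisfies hypothesis (J) and G satisfies hypothesis (G), and let T > 0. Let u be a subsolution of the Cauchy problem (C) with initial datum u₀ ∈ C(ℝ^N) ∩ L^∞(ℝ^N) and v a supersolution with initial datum v₀ ∈ C(ℝ^N) ∩ L^∞(ℝ^N). If u₀ ≤ v₀ on ℝ^N, then u ≤ v on ℝ^N × (0,T). -/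
open MeasureTheory Set Filter Topology Pointwise

noncomputable section

/-- The regularity `u ∈ C⁰([0,T); C(ℝ^N)) ∩ C¹((0,T); C(ℝ^N))`, the time derivative
being the function `ut`. -/
def CauchyC0C1 (N : ℕ) (T : ℝ) (u ut : (Fin N → ℝ) → ℝ → ℝ) : Prop :=
  (∀ t ∈ Ico (0 : ℝ) T, Continuous fun x => u x t) ∧
  (∀ t₀ ∈ Ico (0 : ℝ) T,
    TendstoUniformly (fun t x => u x t) (fun x => u x t₀) (𝓝[Ico (0 : ℝ) T] t₀)) ∧
  (∀ t ∈ Ioo (0 : ℝ) T, Continuous fun x => ut x t) ∧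
  (∀ t₀ ∈ Ioo (0 : ℝ) T,
    TendstoUniformly (fun t x => ut x t) (fun x => ut x t₀) (𝓝[Ioo (0 : ℝ) T] t₀)) ∧
  (∀ x, ∀ t ∈ Ioo (0 : ℝ) T, HasDerivAt (fun s => u x s) (ut x t) t)

/-- A subsolution of the nonlocal Cauchy problem (C) with initial datum `u₀`. -/
def CauchySubsolution (N : ℕ) (T : ℝ) (J : (Fin N → ℝ) → ℝ) (G : (Fin N → ℝ) → ℝ → ℝ)
    (u₀ : (Fin N → ℝ) → ℝ) (u : (Fin N → ℝ) → ℝ → ℝ) : Prop :=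
  (∃ ut, CauchyC0C1 N T u ut ∧
    ∀ x, ∀ t ∈ Ioo (0 : ℝ) T,
      ut x t ≤ ∫ y : Fin N → ℝ, J (x - y) * (u y t - u x t) * G x (u y t - u x t)) ∧
  ∀ x, u x 0 ≤ u₀ x

/-- A supersolution of the nonlocal Cauchy problem (C) with initial datum `v₀`. -/
def CauchySupersolution (N : ℕ) (T : ℝ) (J : (Fin N → ℝ) → ℝ) (G : (Fin N → ℝ) → ℝ → ℝ)
    (v₀ : (Fin N → ℝ) → ℝ) (v : (Fin N → ℝ) → ℝ → ℝ) : Prop :=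
  (∃ vt, CauchyC0C1 N T v vt ∧
    ∀ x, ∀ t ∈ Ioo (0 : ℝ) T,
      vt x t ≥ ∫ y : Fin N → ℝ, J (x - y) * (v y t - v x t) * G x (v y t - v x t)) ∧
  ∀ x, v x 0 ≥ v₀ x


lemma cp_kernel (N : ℕ) (J : (Fin N → ℝ) → ℝ) (hJ : HypJ N J)
    (G : (Fin N → ℝ) → ℝ → ℝ) (x : Fin N → ℝ) (hc : Continuous fun s : ℝ => G x s)
    (α₁ α₂ : ℝ) (h1 : 0 < α₁) (h12 : α₁ ≤ α₂)
    (hg : ∀ s σ : ℝ, σ < s →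
      α₁ * (s - σ) ≤ G x s * s - G x σ * σ ∧ G x s * s - G x σ * σ ≤ α₂ * (s - σ))
    (f g : (Fin N → ℝ) → ℝ) (hf : Continuous f) (hgc : Continuous g) (M : ℝ)
    (hM : ∀ y, f y - g y ≤ M) :
    (∫ y : Fin N → ℝ, J (x - y) * (f y - f x) * G x (f y - f x)) -
      (∫ y : Fin N → ℝ, J (x - y) * (g y - g x) * G x (g y - g x)) ≤
      α₂ * (M - (f x - g x)) := by
  obtain ⟨hJ0, -, hJc, hJs, hJ1, -⟩ := hJ
  have hcs : HasCompactSupport fun y => J (x - y) :=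
    hJs.comp_homeomorph (Homeomorph.subLeft x)
  have hJx : Continuous fun y => J (x - y) := by fun_prop
  have hint : ∀ f : (Fin N → ℝ) → ℝ, Continuous f →
      Integrable fun y : Fin N → ℝ => J (x - y) * (f y - f x) * G x (f y - f x) := by
    intro f hf
    have h2 : Continuous fun y => G x (f y - f x) := hc.comp (by fun_prop)
    apply Continuous.integrable_of_hasCompactSupport
    · fun_prop
    · exact (hcs.mul_right).mul_right
  have hintJ : Integrable fun y => J (x - y) := hJx.integrable_of_hasCompactSupport hcs
  rw [← integral_sub (hint f hf) (hint g hgc)]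
  have hI : ∫ y, J (x - y) * (α₂ * (M - (f x - g x))) = α₂ * (M - (f x - g x)) := by
    rw [integral_mul_const, integral_sub_left_eq_self J volume x, hJ1, one_mul]
  rw [← hI]
  apply integral_mono ((hint f hf).sub (hint g hgc)) (hintJ.mul_const _)
  intro y
  have key : G x (f y - f x) * (f y - f x) - G x (g y - g x) * (g y - g x)
      ≤ α₂ * (M - (f x - g x)) := by
    have hx := hM x
    have hy := hM y
    have hα : 0 < α₂ := lt_of_lt_of_le h1 h12
    have hpos : 0 ≤ α₂ * (M - (f x - g x)) := mul_nonneg hα.le (by linarith)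
    rcases lt_trichotomy (g y - g x) (f y - f x) with h | h | h
    · refine (hg _ _ h).2.trans (mul_le_mul_of_nonneg_left (by linarith) hα.le)
    · rw [h]; linarith
    · have := (hg _ _ h).1
      have : 0 ≤ α₁ * (g y - g x - (f y - f x)) := mul_nonneg h1.le (by linarith)
      linarith
  have := mul_le_mul_of_nonneg_left key (hJ0 (x - y))
  simp only [Pi.sub_apply]
  linarith

lemma cp_local {X : Type*} [TopologicalSpace X] (D : Set X) (hD : Dense D)
    (α a b : ℝ) (hα : 0 < α) (w wt : X → ℝ → ℝ)
    (hwx : ∀ t ∈ Icc a b, Continuous fun x => w x t)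
    (hwt : ∀ x, ContinuousOn (w x) (Icc a b))
    (hd : ∀ x, ∀ t ∈ Ioo a b, HasDerivAt (w x) (wt x t) t)
    (hineq : ∀ x ∈ D, ∀ t ∈ Ioo a b, ∀ M, (∀ y, w y t ≤ M) → wt x t ≤ α * (M - w x t))
    (hinit : ∀ x, w x a ≤ 0) (C : ℝ) (hC : ∀ x, ∀ t ∈ Icc a b, w x t ≤ C) :
    ∀ x, ∀ t ∈ Icc a b, w x t ≤ 0 := by
  have hE : ∀ t ∈ Icc a b, Real.exp (α * (t - a)) ≤ Real.exp (α * (b - a)) := by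
    intro t ht
    exact Real.exp_le_exp.2 (mul_le_mul_of_nonneg_left (by linarith [ht.2]) hα.le)
  have main : ∀ n : ℕ, ∀ x, ∀ t ∈ Icc a b,
      Real.exp (α * (t - a)) * w x t ≤
        (Real.exp (α * (b - a)) * |C|) * ((α * (t - a)) ^ n / n.factorial) := by
    set K := Real.exp (α * (b - a)) * |C| with hK
    intro n
    induction n with
    | zero =>
      intro x t ht
      simp only [pow_zero, Nat.factorial_zero, Nat.cast_one, div_one, mul_one]
      calc _ ≤ Real.exp (α * (t - a)) * |C| :=
            mul_le_mul_of_nonneg_left ((hC x t ht).trans (le_abs_self C)) (Real.exp_pos _).le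
        _ ≤ K := mul_le_mul_of_nonneg_right (hE t ht) (abs_nonneg C)
    | succ n ih =>
      have good : ∀ x ∈ D, ∀ t ∈ Icc a b, Real.exp (α * (t - a)) * w x t ≤
          K * ((α * (t - a)) ^ (n + 1) / (n + 1).factorial) := by
        intro x hx t ht
        let F : ℝ → ℝ := fun s => Real.exp (α * (s - a)) * w x s -
          K * ((α * (s - a)) ^ (n + 1) / (n + 1).factorial)
        have hder : ∀ s ∈ Ioo a b, HasDerivAt F
            (Real.exp (α * (s - a)) * (wt x s + α * w x s) -
              α * (K * ((α * (s - a)) ^ n / n.factorial))) s := by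
          intro s hs
          have e0 : HasDerivAt (fun s => α * (s - a)) α s := by
            simpa using ((hasDerivAt_id s).sub_const a).const_mul α
          have e1 := (e0.exp.mul (hd x s hs)).sub
            (((e0.pow (n + 1)).div_const ((n + 1).factorial : ℝ)).const_mul K)
          refine e1.congr_deriv ?_
          have : (n.factorial : ℝ) ≠ 0 := by positivity
          have : (n : ℝ) + 1 ≠ 0 := by positivity
          rw [Nat.factorial_succ]
          push_cast
          field_simp
          ring
        have hcont : ContinuousOn F (Icc a b) := by
          have := hwt x
          apply ContinuousOn.sub
          · exact ContinuousOn.mul (by fun_prop) this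
          · fun_prop
        have hanti : AntitoneOn F (Icc a b) := by
          apply antitoneOn_of_deriv_nonpos (convex_Icc a b) hcont
          · rw [interior_Icc]
            exact fun s hs => (hder s hs).differentiableAt.differentiableWithinAt
          · rw [interior_Icc]
            intro s hs
            rw [(hder s hs).deriv]
            have hsI := Ioo_subset_Icc_self hs
            set B := K * ((α * (s - a)) ^ n / n.factorial) with hB
            have hep := Real.exp_pos (α * (s - a))
            have h3 := hineq x hx s hs (B / Real.exp (α * (s - a))) (by
              intro y
              rw [le_div_iff₀ hep, mul_comm]
              exact ih y s hsI)
            have h4 : wt x s + α * w x s ≤ α * (B / Real.exp (α * (s - a))) := by linarith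
            have h5 := mul_le_mul_of_nonneg_left h4 hep.le
            have h6 : Real.exp (α * (s - a)) * (α * (B / Real.exp (α * (s - a)))) = α * B := by
              field_simp
            linarith
        have hab : a ≤ b := ht.1.trans ht.2
        have h7 := hanti (left_mem_Icc.2 hab) ht ht.1
        have h8 : F a ≤ 0 := by simpa [F] using hinit x
        have h9 : F t ≤ 0 := h7.trans h8
        simp only [F] at h9
        linarith
      intro x t ht
      have hcl : IsClosed {x | Real.exp (α * (t - a)) * w x t ≤
          K * ((α * (t - a)) ^ (n + 1) / (n + 1).factorial)} :=
        isClosed_le (continuous_const.mul (hwx t ht)) continuous_const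
      have : closure D ⊆ _ := closure_minimal (fun x hx => good x hx t ht) hcl
      exact this (hD x)
  intro x t ht
  have hlim := (FloorSemiring.tendsto_pow_div_factorial_atTop (α * (t - a))).const_mul
    (Real.exp (α * (b - a)) * |C|)
  rw [mul_zero] at hlim
  have := ge_of_tendsto' hlim (fun n => main n x t ht)
  exact nonpos_of_mul_nonpos_right this (Real.exp_pos _)

/-- **Comparison Principle for the nonlocal Cauchy problem (C)**. -/
theorem comparison_principle_cauchy
    (N : ℕ) (hN : 1 ≤ N) (T : ℝ) (hT : 0 < T)
    (J : (Fin N → ℝ) → ℝ) (hJ : HypJ N J)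
    (G : (Fin N → ℝ) → ℝ → ℝ) (hG : HypG N G)
    (u₀ v₀ : (Fin N → ℝ) → ℝ)
    (hu₀ : Continuous u₀ ∧ ∃ M, ∀ x, |u₀ x| ≤ M)
    (hv₀ : Continuous v₀ ∧ ∃ M, ∀ x, |v₀ x| ≤ M)
    (u v : (Fin N → ℝ) → ℝ → ℝ)
    (hu : CauchySubsolution N T J G u₀ u)
    (hv : CauchySupersolution N T J G v₀ v)
    (h₀ : ∀ x, u₀ x ≤ v₀ x) :
    ∀ x, ∀ t ∈ Ioo (0 : ℝ) T, u x t ≤ v x t := by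
  obtain ⟨⟨ut, ⟨huc, huu, -, -, hud⟩, hui⟩, hu0⟩ := hu
  obtain ⟨⟨vt, ⟨hvc, hvu, -, -, hvd⟩, hvi⟩, hv0⟩ := hv
  obtain ⟨-, hGc, α₁, α₂, h1, h12, hGm⟩ := hG
  have hD : Dense {x : Fin N → ℝ | (Continuous fun s : ℝ => G x s) ∧ ∀ s σ : ℝ, σ < s →
      α₁ * (s - σ) ≤ G x s * s - G x σ * σ ∧ G x s * s - G x σ * σ ≤ α₂ * (s - σ)} :=
    Measure.dense_of_ae (hGc.and hGm)
  have hwt : ∀ x, ContinuousOn (fun t => u x t - v x t) (Ico 0 T) := by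
    intro x t ht
    exact ((huu t ht).tendsto_at x).sub ((hvu t ht).tendsto_at x)
  have key : ∀ b ∈ Ioo (0 : ℝ) T, Icc 0 b ⊆ {t | ∀ x, u x t - v x t ≤ 0} := by
    intro b hb
    have hbT : Icc 0 b ⊆ Ico 0 T := fun t ht => ⟨ht.1, ht.2.trans_lt hb.2⟩
    apply IsClosed.Icc_subset_of_forall_exists_gt
    · have : {t | ∀ x, u x t - v x t ≤ 0} ∩ Icc 0 b =
          ⋂ x, (Icc 0 b ∩ (fun t => u x t - v x t) ⁻¹' Iic 0) := by
        ext t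
        simp only [mem_inter_iff, mem_ofPred_eq, mem_iInter, mem_preimage, mem_Iic]
        exact ⟨fun h x => ⟨h.2, h.1 x⟩, fun h => ⟨fun x => (h x).2, (h 0).1⟩⟩
      rw [this]
      exact isClosed_iInter fun x =>
        ((hwt x).mono hbT).preimage_isClosed_of_isClosed isClosed_Icc isClosed_Iic
    · intro x
      have := hu0 x
      have := hv0 x
      have := h₀ x
      linarith
    · intro a ha y hy
      have haT : a ∈ Ico 0 T := hbT (Ico_subset_Icc_self ha.2)
      have e1 := Metric.tendstoUniformly_iff.1 (huu a haT) 1 one_pos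
      have e2 := Metric.tendstoUniformly_iff.1 (hvu a haT) 1 one_pos
      obtain ⟨ε, hε, hball⟩ := Metric.mem_nhdsWithin_iff.1 (e1.and e2)
      have hy : a < y := hy
      obtain ⟨c, hac, hc⟩ := exists_between (lt_min (lt_min hy haT.2) (lt_add_of_pos_right a hε))
      have hcy : c < y := hc.trans_le ((min_le_left _ _).trans (min_le_left _ _))
      have hcT : c < T := hc.trans_le ((min_le_left _ _).trans (min_le_right _ _))
      have hcε : c < a + ε := hc.trans_le (min_le_right _ _)
      have hIT : Icc a c ⊆ Ico 0 T := fun t ht => ⟨haT.1.trans ht.1, ht.2.trans_lt hcT⟩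
      have hIo : Ioo a c ⊆ Ioo 0 T := fun t ht => ⟨haT.1.trans_lt ht.1, ht.2.trans hcT⟩
      refine ⟨c, fun x => ?_, hac, hcy.le⟩
      refine cp_local _ hD α₂ a c (h1.trans_le h12) (fun x t => u x t - v x t)
        (fun x t => ut x t - vt x t) (fun t ht => (huc t (hIT ht)).sub (hvc t (hIT ht)))
        (fun x => (hwt x).mono hIT)
        (fun x t ht => (hud x t (hIo ht)).sub (hvd x t (hIo ht))) ?_ ha.1 2 ?_ x c
        (right_mem_Icc.2 hac.le)
      · intro x hx t ht M hM
        have h3 := cp_kernel N J hJ G x hx.1 α₁ α₂ h1 h12 hx.2 (fun x => u x t)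
          (fun x => v x t) (huc t (hIT (Ioo_subset_Icc_self ht)))
          (hvc t (hIT (Ioo_subset_Icc_self ht))) M hM
        have h4 := hui x t (hIo ht)
        have h5 := hvi x t (hIo ht)
        linarith
      · intro x t ht
        have hb := hball ⟨by
          rw [Metric.mem_ball, Real.dist_eq, abs_lt]
          constructor <;> linarith [ht.1, ht.2], hIT ht⟩
        have h3 := hb.1 x
        have h4 := hb.2 x
        rw [Real.dist_eq, abs_lt] at h3 h4
        have h5 : u x a - v x a ≤ 0 := ha.1 x
        linarith [h3.1, h4.2]
  intro x t ht
  have h : u x t - v x t ≤ 0 := key t ht (right_mem_Icc.2 ht.1.le) x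
  linarith
end
end

section
/- Let μ : ℝ^N → ℝ be any measurable function and define G_μ(x,s) = 1 + μ(x)s/(2(1+μ(x)²s²)) for x ∈ ℝ^N and s ∈ ℝ. Then for all x ∈ ℝ^N and all real numbers s > σ, (1 − 3√3/16)(s−σ) ≤ G_μ(x,s)s − G_μ(x,σ)σ ≤ (1 + 3√3/16)(s−σ). -/
noncomputable section

/-- The kernel `G_μ(x,s) = 1 + μ(x) s / (2 (1 + μ(x)² s²))`. -/
def Gmu (N : ℕ) (μ : (Fin N → ℝ) → ℝ) (x : Fin N → ℝ) (s : ℝ) : ℝ :=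
  1 + μ x * s / (2 * (1 + μ x ^ 2 * s ^ 2))

theorem Gmu_key (a b : ℝ) :
    a + b ≤ 3 * Real.sqrt 3 / 8 * ((1 + a ^ 2) * (1 + b ^ 2)) := by
  obtain ⟨r, hr⟩ : ∃ r, r = Real.sqrt 3 := ⟨_, rfl⟩
  have h3 : r ^ 2 = 3 := by rw [hr]; exact Real.sq_sqrt (by norm_num)
  have h0 : 0 ≤ r := by rw [hr]; exact Real.sqrt_nonneg _
  rw [← hr]
  have h1 : 1.7 ≤ r := by nlinarith
  obtain ⟨t, ht⟩ : ∃ t, t = (a + b) / 2 := ⟨_, rfl⟩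
  have e : (1 + a ^ 2) * (1 + b ^ 2) = (1 - a * b) ^ 2 + 4 * t ^ 2 := by rw [ht]; ring
  have e2 : a + b = 2 * t := by rw [ht]; ring
  have hq : a * b ≤ t ^ 2 := by rw [ht]; nlinarith [sq_nonneg (a - b)]
  rw [e, e2]
  rcases le_total (t ^ 2) 1 with h | h
  · have k1 : (1 + t ^ 2) ^ 2 ≤ (1 - a * b) ^ 2 + 4 * t ^ 2 := by nlinarith
    have k2 : 2 * t ≤ 3 * r / 8 * (1 + t ^ 2) ^ 2 := by
      have k3 : 0 ≤ (r * t - 1) ^ 2 * ((r * t) ^ 2 + 2 * (r * t) + 9) := by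
        apply mul_nonneg (sq_nonneg _)
        nlinarith [sq_nonneg (r * t + 1)]
      have k4 : (r * t - 1) ^ 2 * ((r * t) ^ 2 + 2 * (r * t) + 9)
          = r * (3 * r * (1 + t ^ 2) ^ 2 - 16 * t) := by
        have : r ^ 4 = 9 := by nlinarith
        linear_combination (t^4) * this + (6 * t^2 - 3 * (1 + t^2)^2) * h3
      rw [k4] at k3
      have := nonneg_of_mul_nonneg_right k3 (by linarith)
      linarith
    exact k2.trans (mul_le_mul_of_nonneg_left k1 (by positivity))
  · have k1 : 2 * t ≤ 2 * t ^ 2 := by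
      rcases le_total t 1 with g | g <;> nlinarith
    have k2 : 0 ≤ r * (1 - a * b) ^ 2 := by positivity
    nlinarith [mul_nonneg (sub_nonneg.2 h1) (sq_nonneg t)]

/-- **Strong monotonicity of the prototype kernel `G_μ`**: for every measurable `μ`,
`(1 − 3√3/16)(s−σ) ≤ G_μ(x,s)s − G_μ(x,σ)σ ≤ (1 + 3√3/16)(s−σ)` whenever `s > σ`. -/
theorem Gmu_strong_monotonicity (N : ℕ) (μ : (Fin N → ℝ) → ℝ) (hμ : Measurable μ)
    (x : Fin N → ℝ) (s σ : ℝ) (hs : σ < s) :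
    (1 - 3 * Real.sqrt 3 / 16) * (s - σ) ≤ Gmu N μ x s * s - Gmu N μ x σ * σ ∧
      Gmu N μ x s * s - Gmu N μ x σ * σ ≤ (1 + 3 * Real.sqrt 3 / 16) * (s - σ) := by
  obtain ⟨m, hm⟩ : ∃ m, m = μ x := ⟨_, rfl⟩
  have A := Gmu_key (m * s) (m * σ)
  have B := Gmu_key (-(m * s)) (-(m * σ))
  have hd : 0 < (1 + (m * s) ^ 2) * (1 + (m * σ) ^ 2) := by positivity
  have E : Gmu N μ x s * s - Gmu N μ x σ * σ = (s - σ) +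
      (s - σ) / 2 * ((m * s + m * σ) / ((1 + (m * s) ^ 2) * (1 + (m * σ) ^ 2))) := by
    have d1 : 1 + m ^ 2 * s ^ 2 ≠ 0 := by positivity
    have d2 : 1 + m ^ 2 * σ ^ 2 ≠ 0 := by positivity
    simp only [Gmu, ← hm, mul_pow]
    field_simp
    ring
  have A' := (div_le_iff₀ hd).2 A
  have B' : -(3 * Real.sqrt 3 / 8) ≤
      (m * s + m * σ) / ((1 + (m * s) ^ 2) * (1 + (m * σ) ^ 2)) := by
    rw [le_div_iff₀ hd]
    rw [neg_sq, neg_sq] at B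
    linarith
  have hp : 0 ≤ (s - σ) / 2 := by linarith
  have A2 := mul_le_mul_of_nonneg_left A' hp
  have B2 := mul_le_mul_of_nonneg_left B' hp
  rw [E]
  constructor <;> linarith
end
end

section
/- Let q > 1 be a real number. Then for all real numbers a, b ≥ 0, (a−b)(a^{q−1} − b^{q−1}) ≥ (4(q−1)/q²)·(a^{q/2} − b^{q/2})². -/
lemma aux_sinh_pos (r s : ℝ) (hr : 0 ≤ r) (hr1 : r ≤ 1) (hs : 0 ≤ s) :
    Real.sinh (r * s) ≤ r * Real.sinh s := by
  have hd : ∀ x : ℝ, HasDerivAt (fun x => r * Real.sinh x - Real.sinh (r * x))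
      (r * Real.cosh x - Real.cosh (r * x) * r) x := by
    intro x
    have h1 := (Real.hasDerivAt_sinh x).const_mul r
    have h2 : HasDerivAt (fun x : ℝ => r * x) r x := by
      simpa using (hasDerivAt_id x).const_mul r
    exact h1.sub h2.sinh
  have hm : MonotoneOn (fun x => r * Real.sinh x - Real.sinh (r * x)) (Set.Ici 0) := by
    apply monotoneOn_of_deriv_nonneg (convex_Ici 0)
    · exact fun x _ => (hd x).continuousAt.continuousWithinAt
    · exact fun x _ => (hd x).differentiableAt.differentiableWithinAt
    · intro x hx
      rw [interior_Ici] at hx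
      have hx : 0 < x := hx
      rw [(hd x).deriv]
      have : Real.cosh (r * x) ≤ Real.cosh x := by
        rw [Real.cosh_le_cosh, abs_of_pos hx, abs_of_nonneg (by positivity)]
        nlinarith
      nlinarith
  have := hm (Set.mem_Ici.2 le_rfl) (Set.mem_Ici.2 hs) hs
  simp at this
  linarith

lemma aux_sinh_sq (r s : ℝ) (hr1 : |r| ≤ 1) :
    Real.sinh (r * s) ^ 2 ≤ r ^ 2 * Real.sinh s ^ 2 := by
  have h := aux_sinh_pos |r| |s| (abs_nonneg _) hr1 (abs_nonneg _)
  rw [← abs_mul, ← Real.abs_sinh, ← Real.abs_sinh, ← abs_mul] at h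
  rw [← mul_pow]
  exact sq_le_sq.2 h

lemma aux_c (q : ℝ) (hq : 1 < q) : 4 * (q - 1) / q ^ 2 = 1 - ((q - 2) / q) ^ 2 := by
  have : q ≠ 0 := by linarith
  field_simp
  ring

lemma aux_zero (q : ℝ) (hq : 1 < q) (a : ℝ) (ha : 0 ≤ a) :
    (4 * (q - 1) / q ^ 2) * (a ^ (q / 2)) ^ 2 ≤ a * a ^ (q - 1) := by
  have h1 : (a ^ (q / 2)) ^ 2 = a ^ q := by
    rw [← Real.rpow_natCast, ← Real.rpow_mul ha]; congr 1; push_cast; ring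
  have h2 : a * a ^ (q - 1) = a ^ q := by
    have := Real.rpow_add_of_nonneg ha zero_le_one (by linarith : 0 ≤ q - 1)
    rw [Real.rpow_one] at this
    rw [← this]; congr 1; ring
  rw [h1, h2, aux_c q hq]
  have := Real.rpow_nonneg ha q
  nlinarith [mul_nonneg (sq_nonneg ((q - 2) / q)) this]

lemma aux_exp_s18 (x y p : ℝ) : Real.exp (x + y) ^ p - Real.exp (x - y) ^ p
    = Real.exp (p * x) * (2 * Real.sinh (p * y)) := by
  rw [← Real.exp_mul, ← Real.exp_mul, Real.sinh_eq,
    show (x + y) * p = p * x + p * y by ring, show (x - y) * p = p * x + -(p * y) by ring,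
    Real.exp_add, Real.exp_add]
  ring

lemma aux_pos (q : ℝ) (hq : 1 < q) (x y : ℝ) :
    (4 * (q - 1) / q ^ 2) *
      (Real.exp (x + y) ^ (q / 2) - Real.exp (x - y) ^ (q / 2)) ^ 2 ≤
      (Real.exp (x + y) - Real.exp (x - y)) *
        (Real.exp (x + y) ^ (q - 1) - Real.exp (x - y) ^ (q - 1)) := by
  have h1 := aux_exp_s18 x y 1
  simp only [Real.rpow_one, one_mul] at h1
  rw [h1, aux_exp_s18, aux_exp_s18, aux_c q hq]
  have hq0 : q ≠ 0 := by linarith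
  have hs := aux_sinh_sq ((q - 2) / q) (q / 2 * y) (by
    rw [abs_div, abs_of_pos (by linarith : 0 < q), div_le_one (by linarith), abs_le]
    constructor <;> linarith)
  have e : (q - 2) / q * (q / 2 * y) = (q - 2) / 2 * y := by field_simp
  rw [e] at hs
  have hid : Real.sinh y * Real.sinh ((q - 1) * y)
      = Real.sinh (q / 2 * y) ^ 2 - Real.sinh ((q - 2) / 2 * y) ^ 2 := by
    have ea : y = q / 2 * y - (q - 2) / 2 * y := by ring
    have eb : (q - 1) * y = q / 2 * y + (q - 2) / 2 * y := by ring
    rw [eb]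
    conv_lhs => rw [show Real.sinh y = Real.sinh (q / 2 * y - (q - 2) / 2 * y) by rw [← ea]]
    rw [Real.sinh_sub, Real.sinh_add]
    have c1 := Real.cosh_sq (q / 2 * y)
    have c2 := Real.cosh_sq ((q - 2) / 2 * y)
    linear_combination (Real.sinh (q / 2 * y)) ^ 2 * c2 - (Real.sinh ((q - 2) / 2 * y)) ^ 2 * c1
  have he : Real.exp (q / 2 * x) ^ 2 = Real.exp x * Real.exp ((q - 1) * x) := by
    rw [← Real.exp_add, ← Real.exp_nat_mul]; congr 1; push_cast; ring
  have hE : 0 ≤ Real.exp x * Real.exp ((q - 1) * x) := by positivity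
  calc _ = 4 * (Real.exp x * Real.exp ((q - 1) * x)) *
        ((1 - ((q - 2) / q) ^ 2) * Real.sinh (q / 2 * y) ^ 2) := by rw [← he]; ring
    _ ≤ 4 * (Real.exp x * Real.exp ((q - 1) * x)) *
        (Real.sinh y * Real.sinh ((q - 1) * y)) := by
      apply mul_le_mul_of_nonneg_left _ (by positivity)
      rw [hid]; linarith
    _ = _ := by ring

/-- **Elementary power inequality**: for `q > 1` and `a, b ≥ 0`,
`(a−b)(a^{q−1} − b^{q−1}) ≥ (4(q−1)/q²)(a^{q/2} − b^{q/2})²`. -/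
theorem power_difference_inequality (q : ℝ) (hq : 1 < q) (a b : ℝ)
    (ha : 0 ≤ a) (hb : 0 ≤ b) :
    (4 * (q - 1) / q ^ 2) * (a ^ (q / 2) - b ^ (q / 2)) ^ 2 ≤
      (a - b) * (a ^ (q - 1) - b ^ (q - 1)) := by
  have z1 : (0 : ℝ) ^ (q / 2) = 0 := Real.zero_rpow (by linarith)
  have z2 : (0 : ℝ) ^ (q - 1) = 0 := Real.zero_rpow (by linarith)
  rcases ha.eq_or_lt with rfl | ha'
  · rw [z1, z2]
    have := aux_zero q hq b hb
    calc _ = (4 * (q - 1) / q ^ 2) * (b ^ (q / 2)) ^ 2 := by ring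
      _ ≤ _ := this
      _ = _ := by ring
  rcases hb.eq_or_lt with rfl | hb'
  · rw [z1, z2]
    simpa using aux_zero q hq a ha
  have := aux_pos q hq ((Real.log a + Real.log b) / 2) ((Real.log a - Real.log b) / 2)
  rw [show (Real.log a + Real.log b) / 2 + (Real.log a - Real.log b) / 2 = Real.log a by ring,
    show (Real.log a + Real.log b) / 2 - (Real.log a - Real.log b) / 2 = Real.log b by ring,
    Real.exp_log ha', Real.exp_log hb'] at this
  exact this
end
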